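/- Assume (H1) and (H2). Then the essential spectrum of the linearized operator A = J(H₀ + Df(φ)) is contained in the imaginary axis {z ∈ ℂ : Re z = 0}, and the number of eigenvalues of A in {z ∈ ℂ : Re z > 0} is finite. -/

import Mathlib

open MeasureTheory ENNReal

noncomputable section

/-- Euclidean space ℝ^N. -/
abbrev Rn (N : ℕ) := EuclideanSpace ℝ (Fin N)

variable {N : ℕ}

section BasicDefs

variable {G : Type} [NormedAddCommGroup G] [NormedSpace ℝ G]

/-- Pointwise Laplacian, defined via the second iterated Fréchet derivative. -/
def lap (f : Rn N → G) (x : Rn N) : G :=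
  ∑ i : Fin N,
    iteratedFDeriv ℝ 2 f x ![EuclideanSpace.single i 1, EuclideanSpace.single i 1]

/-- Sobolev H^k norm (sum of L² norms of iterated derivatives up to order k). -/
def sobNorm (k : ℕ) (f : Rn N → G) : ℝ≥0∞ :=
  ∑ i ∈ Finset.range (k + 1), eLpNorm (iteratedFDeriv ℝ i f) 2 volume

/-- (Strong) membership in the Sobolev space H^k. -/
def MemSobolev (k : ℕ) (f : Rn N → G) : Prop :=
  ContDiff ℝ (k : ℕ∞) f ∧ ∀ i ≤ k, MemLp (iteratedFDeriv ℝ i f) 2 volume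

/-- L^q norm in time on (0,T) of an ℝ≥0∞-valued function. -/
def timeLp (q : ℝ≥0∞) (T : ℝ) (Φ : ℝ → ℝ≥0∞) : ℝ≥0∞ :=
  if q = ∞ then essSup Φ (volume.restrict (Set.Ioo 0 T))
  else (∫⁻ t in Set.Ioo 0 T, Φ t ^ q.toReal) ^ (1 / q.toReal)

/-- ‖e^{-λ·}f‖_{L^q((0,T),L^r)}. -/
def twNorm (q r : ℝ≥0∞) (lam T : ℝ) (f : ℝ → Rn N → G) : ℝ≥0∞ :=
  timeLp q T (fun t => ENNReal.ofReal (Real.exp (-(lam * t))) * eLpNorm (f t) r volume)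

/-- The weighted norm ‖f‖_{L^{q,λ}_T L^r} = e^{λT}‖e^{-λ·}f‖_{L^q((0,T),L^r)}. -/
def wNorm (q r : ℝ≥0∞) (lam T : ℝ) (f : ℝ → Rn N → G) : ℝ≥0∞ :=
  ENNReal.ofReal (Real.exp (lam * T)) * twNorm q r lam T f

/-- The weighted norm ‖f‖_{L^{∞,λ}_T H²}. -/
def wNormH2 (lam T : ℝ) (f : ℝ → Rn N → G) : ℝ≥0∞ :=
  ENNReal.ofReal (Real.exp (lam * T)) *
    essSup (fun t => ENNReal.ofReal (Real.exp (-(lam * t))) * sobNorm 2 (f t))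
      (volume.restrict (Set.Ioo 0 T))

/-- Pointwise time derivative of a time-dependent function. -/
def tderiv (v : ℝ → Rn N → G) : ℝ → Rn N → G :=
  fun t x => deriv (fun s => v s x) t

/-- The norm ‖v‖_{X_T} = ‖v‖_{L^{∞,λ}_T H²} + ‖∂ₜv‖_{L^{q₁,λ}_T L^{r₁}} + ‖∂ₜv‖_{L^{q₂,λ}_T L^{r₂}}. -/
def XNorm (q₁ r₁ q₂ r₂ : ℝ≥0∞) (lam T : ℝ) (v : ℝ → Rn N → G) : ℝ≥0∞ :=
  wNormH2 lam T v + wNorm q₁ r₁ lam T (tderiv v) + wNorm q₂ r₂ lam T (tderiv v)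

end BasicDefs

/-- A pair (q,r) is admissible: 2/q = N(1/2-1/r), 2 ≤ r ≤ 2N/(N-2)
(2 ≤ r < ∞ if N = 2, 2 ≤ r ≤ ∞ if N = 1), (q,r) ≠ (2,∞). -/
def Admissible (N : ℕ) (q r : ℝ≥0∞) : Prop :=
  2 ≤ r ∧ 2 / q = (N : ℝ≥0∞) * (1 / 2 - 1 / r) ∧
    (3 ≤ N → r ≤ 2 * (N : ℝ≥0∞) / ((N : ℝ≥0∞) - 2)) ∧
    (N = 2 → r ≠ ∞) ∧ ¬(q = 2 ∧ r = ∞)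

/-- Subcriticality: 1 < p < 2* - 1 with 2* = 2N/(N-2) for N ≥ 3 and 2* = ∞ for N = 1,2. -/
def Subcrit (N : ℕ) (p : ℝ) : Prop :=
  1 < p ∧ (3 ≤ N → p < 2 * (N : ℝ) / ((N : ℝ) - 2) - 1)

/-- The nonlinearity f(z) = -g(|z|²)z, identifying ℝ² with ℂ. -/
def fpot (g : ℝ → ℝ) : ℂ → ℂ :=
  fun z => -((g (Complex.normSq z) : ℝ) : ℂ) * z

/-- The Hölder-type bound on the derivative required in (H1). -/
def H1bound (p : ℝ) (f : ℂ → ℂ) : Prop :=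
  ContDiff ℝ 1 f ∧ f 0 = 0 ∧ fderiv ℝ f 0 = 0 ∧
    ∃ C : ℝ,
      (p ≤ 2 → ∀ z₁ z₂ : ℂ,
        ‖fderiv ℝ f z₁ - fderiv ℝ f z₂‖ ≤ C * ‖z₁ - z₂‖ ^ (p - 1)) ∧
      (2 < p → ∀ z₁ z₂ : ℂ,
        ‖fderiv ℝ f z₁ - fderiv ℝ f z₂‖ ≤ C * (‖z₁‖ ^ (p - 2) + ‖z₂‖ ^ (p - 2)) * ‖z₁ - z₂‖)

/-- Hypothesis (H1). -/
structure H1full (N : ℕ) (g : ℝ → ℝ) (f₁ f₂ : ℂ → ℂ) (p₁ p₂ : ℝ) : Prop where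
  gcont : ContinuousOn g (Set.Ici 0)
  hsum : ∀ z, fpot g z = f₁ z + f₂ z
  sub1 : Subcrit N p₁
  sub2 : Subcrit N p₂
  bd1 : H1bound p₁ f₁
  bd2 : H1bound p₂ f₂

/-- Hypothesis (H2): ω > 0 and φ ∈ H¹ is a nontrivial solution of -Δφ + ωφ - g(|φ|²)φ = 0. -/
def H2hyp (ω : ℝ) (g : ℝ → ℝ) (φ : Rn N → ℂ) : Prop :=
  0 < ω ∧ φ ≠ 0 ∧ MemSobolev 1 φ ∧
    ∀ x, -(lap φ x) + (ω : ℂ) * φ x - ((g (Complex.normSq (φ x)) : ℝ) : ℂ) * φ x = 0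

/-- The linearized operator A = JH acting on ℝ²-valued functions, in the identification
ℝ² ≅ ℂ (so that J is multiplication by -i). -/
def Aop (g : ℝ → ℝ) (ω : ℝ) (φ : Rn N → ℂ) (u : Rn N → ℂ) : Rn N → ℂ :=
  fun x => -Complex.I * (-(lap u x) + (ω : ℂ) * u x + fderiv ℝ (fpot g) (φ x) (u x))

/-- Complexification of a real-linear map on ℝ² ≅ ℂ, acting on ℂ². -/
def cext (T : ℂ →L[ℝ] ℂ) (w : ℂ × ℂ) : ℂ × ℂ :=
  (((T 1).re : ℂ) * w.1 + ((T Complex.I).re : ℂ) * w.2,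
   ((T 1).im : ℂ) * w.1 + ((T Complex.I).im : ℂ) * w.2)

/-- The complexified linearized operator A = J(H₀ + Df(φ)) acting on ℂ²-valued functions. -/
def AopC (g : ℝ → ℝ) (ω : ℝ) (φ : Rn N → ℂ) (u : Rn N → ℂ × ℂ) : Rn N → ℂ × ℂ :=
  fun x =>
    (-(lap (fun y => (u y).2) x) + (ω : ℂ) * (u x).2 +
        (cext (fderiv ℝ (fpot g) (φ x)) (u x)).2,
     -(-(lap (fun y => (u y).1) x) + (ω : ℂ) * (u x).1 +
        (cext (fderiv ℝ (fpot g) (φ x)) (u x)).1))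

/-- z is an eigenvalue of the (complexified) linearized operator A. -/
def IsEigen (g : ℝ → ℝ) (ω : ℝ) (φ : Rn N → ℂ) (z : ℂ) : Prop :=
  ∃ χ : Rn N → ℂ × ℂ, χ ≠ 0 ∧ MemSobolev 2 χ ∧ ∀ x, AopC g ω φ χ x = z • χ x

/-- Hypothesis (H3): A has an eigenvalue with positive real part. -/
def H3hyp (g : ℝ → ℝ) (ω : ℝ) (φ : Rn N → ℂ) : Prop :=
  ∃ z : ℂ, 0 < z.re ∧ IsEigen g ω φ z

/-- u is a (global H¹) solution of i∂ₜu + Δu + g(|u|²)u = 0. -/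
def IsNLS (g : ℝ → ℝ) (u : ℝ → Rn N → ℂ) : Prop :=
  (∀ t, MemSobolev 1 (u t)) ∧
    ∀ t x, HasDerivAt (fun s => u s x)
      (Complex.I * (lap (u t) x + ((g (Complex.normSq (u t x)) : ℝ) : ℂ) * u t x)) t

/-- Orbital stability of the standing wave e^{iωt}φ. -/
def OrbStable (g : ℝ → ℝ) (ω : ℝ) (φ : Rn N → ℂ) : Prop :=
  ∀ ε : ℝ, 0 < ε → ∃ δ : ℝ, 0 < δ ∧
    ∀ u : ℝ → Rn N → ℂ, IsNLS g u →
      sobNorm 1 (fun x => u 0 x - φ x) < ENNReal.ofReal δ →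
      ∀ t : ℝ, 0 ≤ t → ∃ (θ : ℝ) (y : Rn N),
        sobNorm 1 (fun x => u t x - Complex.exp (θ * Complex.I) * φ (x + y)) <
          ENNReal.ofReal ε

/-- h(v) = J[f(φ+v) - f(φ) - Df(φ)v] in the identification ℝ² ≅ ℂ. -/
def hfun (f : ℂ → ℂ) (φ v : Rn N → ℂ) : Rn N → ℂ :=
  fun x => -Complex.I * (f (φ x + v x) - f (φ x) - fderiv ℝ f (φ x) (v x))

/-- ∂ₜ h(v) = J[Df(φ+v) - Df(φ)]∂ₜv. -/
def hderiv (f : ℂ → ℂ) (φ : Rn N → ℂ) (v : ℝ → Rn N → ℂ) : ℝ → Rn N → ℂ :=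
  fun t x => -Complex.I * ((fderiv ℝ f (φ x + v t x) - fderiv ℝ f (φ x)) (tderiv v t x))

/-- v is a (global H²) solution of ∂ₜv = Av + h(v). -/
def IsLinSol (g : ℝ → ℝ) (ω : ℝ) (φ : Rn N → ℂ) (v : ℝ → Rn N → ℂ) : Prop :=
  (∀ t, MemSobolev 2 (v t)) ∧
    ∀ t x, HasDerivAt (fun s => v s x)
      (Aop g ω φ (v t) x + hfun (fpot g) φ (v t) x) t

/-- The operator A = JH₀ + V with a bounded 2×2 matrix potential V,
acting on ℂ²-valued functions. -/
def AVop (ω : ℝ) (V : Rn N → Matrix (Fin 2) (Fin 2) ℝ) (u : Rn N → ℂ × ℂ) :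
    Rn N → ℂ × ℂ :=
  fun x =>
    ((-(lap (fun y => (u y).2) x) + (ω : ℂ) * (u x).2) +
        ((V x 0 0 : ℝ) : ℂ) * (u x).1 + ((V x 0 1 : ℝ) : ℂ) * (u x).2,
     (-(-(lap (fun y => (u y).1) x) + (ω : ℂ) * (u x).1)) +
        ((V x 1 0 : ℝ) : ℂ) * (u x).1 + ((V x 1 1 : ℝ) : ℂ) * (u x).2)

/-- V is a bounded (L^∞) matrix potential. -/
def VBounded (V : Rn N → Matrix (Fin 2) (Fin 2) ℝ) : Prop :=
  (∀ i j, Measurable fun x => V x i j) ∧ ∃ M : ℝ, ∀ x i j, |V x i j| ≤ M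

/-- S is the strongly continuous group on L² generated by the operator L. -/
structure IsEvolGroupC (L : (Rn N → ℂ × ℂ) → (Rn N → ℂ × ℂ))
    (S : ℝ → (Rn N → ℂ × ℂ) → (Rn N → ℂ × ℂ)) : Prop where
  zero : ∀ u, S 0 u = u
  comp : ∀ s t u, S (s + t) u = S s (S t u)
  lin : ∀ (t : ℝ) (a : ℂ) (u v : Rn N → ℂ × ℂ),
    S t (fun x => a • u x + v x) = fun x => a • S t u x + S t v x
  cont : ∀ u, MemLp u 2 volume → ∀ t₀ : ℝ,
    Filter.Tendsto (fun t => eLpNorm (fun x => S t u x - S t₀ u x) 2 volume)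
      (nhds t₀) (nhds 0)
  gen : ∀ u, MemSobolev 2 u → ∀ t : ℝ,
    MemSobolev 2 (S t u) ∧ ∀ x, HasDerivAt (fun s => S s u x) (L (S t u) x) t

/-- Γ[f](t) = ∫₀ᵗ e^{(t-s)A} f(s) ds. -/
def Gamma (S : ℝ → (Rn N → ℂ × ℂ) → (Rn N → ℂ × ℂ)) (f : ℝ → Rn N → ℂ × ℂ)
    (t : ℝ) : Rn N → ℂ × ℂ :=
  fun x => ∫ s in (0:ℝ)..t, S (t - s) (f s) x

/-- α = min{1, r₁-2, r₂-2}. -/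
def alphaConst (r₁ r₂ : ℝ) : ℝ := min 1 (min (r₁ - 2) (r₂ - 2))

/-- Real part of a ℂ²-valued function, as an element of the real space L²(ℝ^N,ℝ²) ≅ L²(ℝ^N,ℂ). -/
def reChi (χ : Rn N → ℂ × ℂ) : Rn N → ℂ :=
  fun x => ((χ x).1.re : ℂ) + ((χ x).2.re : ℂ) * Complex.I

/-- The constant k = 1 if Im λ* = 0, k = exp(2π Re λ*/|Im λ*|) otherwise. -/
def kconst (lam : ℂ) : ℝ :=
  if lam.im = 0 then 1 else Real.exp (2 * Real.pi * lam.re / |lam.im|)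

/-- The defining property of T_δ:
log(ε₀/(kδ)) ≤ Re λ* T_δ ≤ log(ε₀/δ) and Im λ* T_δ ∈ 2πℤ. -/
def TdeltaProp (lam : ℂ) (ε₀ δ T : ℝ) : Prop :=
  Real.log (ε₀ / (kconst lam * δ)) ≤ lam.re * T ∧
    lam.re * T ≤ Real.log (ε₀ / δ) ∧ ∃ n : ℤ, lam.im * T = 2 * Real.pi * (n : ℝ)

/-- The real L² inner product on L²(ℝ^N,ℝ²) in the identification ℝ² ≅ ℂ. -/
def realL2inner (u v : Rn N → ℂ) : ℝ :=
  ∫ x, ((starRingEnd ℂ) (u x) * v x).re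

/-- The L² inner product for ℂ²-valued functions. -/
def l2innerC2 (u v : Rn N → ℂ × ℂ) : ℂ :=
  ∫ x, ((starRingEnd ℂ) (u x).1 * (v x).1 + (starRingEnd ℂ) (u x).2 * (v x).2)

section Resolvent

variable {G : Type} [NormedAddCommGroup G] [NormedSpace ℂ G]

/-- z belongs to the resolvent set of the operator L with domain `dom`:
there is a bounded everywhere-defined inverse of z - L mapping L² into the domain. -/
def InResSet (L : (Rn N → G) → (Rn N → G)) (dom : (Rn N → G) → Prop) (z : ℂ) : Prop :=
  ∃ R : (Rn N → G) → (Rn N → G),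
    (∀ (a : ℂ) (u v : Rn N → G), R (fun x => a • u x + v x) = fun x => a • R u x + R v x) ∧
    (∀ u, MemLp u 2 volume → dom (R u)) ∧
    (∀ u, MemLp u 2 volume → ∀ x, z • R u x - L (R u) x = u x) ∧
    (∀ u, dom u → ∀ x, R (fun y => z • u y - L u y) x = u x) ∧
    ∃ M : ℝ, ∀ u, eLpNorm (R u) 2 volume ≤ ENNReal.ofReal M * eLpNorm u 2 volume

/-- The spectrum of the operator L with domain `dom`. -/
def specSet (L : (Rn N → G) → (Rn N → G)) (dom : (Rn N → G) → Prop) : Set ℂ :=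
  {z | ¬ InResSet L dom z}

end Resolvent

/-- z belongs to the essential spectrum of A (Weyl singular sequence characterization). -/
def InEssSpec (g : ℝ → ℝ) (ω : ℝ) (φ : Rn N → ℂ) (z : ℂ) : Prop :=
  ∃ u : ℕ → Rn N → ℂ × ℂ,
    (∀ n, MemSobolev 2 (u n)) ∧ (∀ n, eLpNorm (u n) 2 volume = 1) ∧
    Filter.Tendsto
      (fun n => eLpNorm (fun x => AopC g ω φ (u n) x - z • u n x) 2 volume)
      Filter.atTop (nhds 0) ∧
    ∀ w : Rn N → ℂ × ℂ, MemLp w 2 volume →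
      Filter.Tendsto (fun n => l2innerC2 (u n) w) Filter.atTop (nhds 0)

/-- The operator D = -Δ + ω acting on complex-valued functions. -/
def Dop (ω : ℝ) (u : Rn N → ℂ) : Rn N → ℂ :=
  fun x => -(lap u x) + (ω : ℂ) * u x

/-- The operator L(ξ) = [[ξ, -D],[D, ξ]]. -/
def Lxi (ω : ℝ) (ξ : ℂ) (u : Rn N → ℂ × ℂ) : Rn N → ℂ × ℂ :=
  fun x => (ξ * (u x).1 - Dop ω (fun y => (u y).2) x,
            Dop ω (fun y => (u y).1) x + ξ * (u x).2)

/-- φ is a weak H¹ solution of -Δφ + ωφ - g(|φ|²)φ = 0. -/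
def WeakH1Sol (ω : ℝ) (g : ℝ → ℝ) (φ : Rn N → ℂ) : Prop :=
  MemLp φ 2 volume ∧ Differentiable ℝ φ ∧ MemLp (fderiv ℝ φ) 2 volume ∧
    ∀ ψ : Rn N → ℂ, ContDiff ℝ (⊤ : ℕ∞) ψ → HasCompactSupport ψ →
      ((∫ x, ∑ i : Fin N,
          fderiv ℝ φ x (EuclideanSpace.single i 1) *
            fderiv ℝ ψ x (EuclideanSpace.single i 1)) +
        (∫ x, (ω : ℂ) * φ x * ψ x) -
        ∫ x, ((g (Complex.normSq (φ x)) : ℝ) : ℂ) * φ x * ψ x) = 0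

end

noncomputable section

/-- The power nonlinearity f(z) = -|z|^{p-1} z on ℝ² ≅ ℂ. -/
def fpow (p : ℝ) : ℂ → ℂ := fun z => -((‖z‖ ^ (p - 1) : ℝ) : ℂ) * z

end


section Aux1

/-- The squared H1 norm. -/
noncomputable def EH1 {N : ℕ} (a : Rn N → ℂ) : ℝ≥0∞ :=
  ∫⁻ x, (‖a x‖ₑ ^ 2 + ‖fderiv ℝ a x‖ₑ ^ 2)

lemma enn_add_sq (a b : ℝ≥0∞) : (a + b) ^ 2 ≤ 2 * (a ^ 2 + b ^ 2) := by
  by_cases ha : a = ∞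
  · simp [ha]
  by_cases hb : b = ∞
  · simp [hb]
  lift a to NNReal using ha
  lift b to NNReal using hb
  norm_cast
  rw [← NNReal.coe_le_coe]
  push_cast
  exact add_sq_le

lemma sob_one_aux (v : Rn 1 → ℂ) (hv : ContDiff ℝ 1 v) (hc : HasCompactSupport v) (x : Rn 1) :
    ‖v x‖ₑ ≤ ∫⁻ y, ‖fderiv ℝ v y‖ₑ := by
  let e : ℝ ≃ₗᵢ[ℝ] Rn 1 := (OrthonormalBasis.singleton (Fin 1) ℝ).repr
  have hvc : ContDiff ℝ 1 (v ∘ e) := hv.comp e.toContinuousLinearEquiv.contDiff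
  have hcc : HasCompactSupport (v ∘ e) := hc.comp_homeomorph e.toHomeomorph
  obtain ⟨t, rfl⟩ := e.surjective x
  calc ‖v (e t)‖ₑ = ‖(v ∘ e) t‖ₑ := rfl
    _ ≤ ∫⁻ s in Set.Iic t, ‖deriv (v ∘ e) s‖ₑ := by
        apply le_trans (by simp) (HasCompactSupport.enorm_le_lintegral_Ici_deriv hvc hcc t)
    _ ≤ ∫⁻ s, ‖deriv (v ∘ e) s‖ₑ := setLIntegral_le_lintegral _ _
    _ ≤ ∫⁻ s, ‖fderiv ℝ v (e s)‖ₑ := by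
        apply lintegral_mono
        intro s
        have hd : HasDerivAt (v ∘ e) (fderiv ℝ v (e s) (e 1)) s := by
          have h1 : HasFDerivAt v (fderiv ℝ v (e s)) (e s) :=
            (hv.differentiable one_ne_zero (e s)).hasFDerivAt
          have h2 : HasDerivAt (fun s => e s) (e 1) s := by
            have := (e.toContinuousLinearEquiv : ℝ →L[ℝ] Rn 1).hasDerivAt (x := s)
            simpa using this
          exact h1.comp_hasDerivAt s h2
        simp only [hd.deriv]
        refine (ContinuousLinearMap.le_opENorm _ _).trans ?_
        have : ‖e 1‖ₑ = 1 := by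
          rw [← ofReal_norm, e.norm_map]; simp
        rw [this, mul_one]
    _ = ∫⁻ y, ‖fderiv ℝ v y‖ₑ := by
        have hcont : Continuous (fderiv ℝ v) := hv.continuous_fderiv one_ne_zero
        exact (e.measurePreserving).lintegral_comp (f := fun y => ‖fderiv ℝ v y‖ₑ) (by fun_prop)

lemma sob_one (v : Rn 1 → ℂ) (hv : ContDiff ℝ 1 v) (hc : HasCompactSupport v) :
    ∫⁻ x, ‖v x‖ₑ ^ 2 ≤ (∫⁻ x, (‖v x‖ₑ + ‖fderiv ℝ v x‖ₑ)) ^ 2 := by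
  have hm : Measurable fun x => ‖v x‖ₑ := hv.continuous.enorm.measurable
  calc ∫⁻ x, ‖v x‖ₑ ^ 2 ≤ ∫⁻ x, (∫⁻ y, ‖fderiv ℝ v y‖ₑ) * ‖v x‖ₑ := by
        apply lintegral_mono; intro x
        simp only [sq]
        gcongr
        exact sob_one_aux v hv hc x
    _ = (∫⁻ y, ‖fderiv ℝ v y‖ₑ) * ∫⁻ x, ‖v x‖ₑ := by
        rw [lintegral_const_mul _ hm]
    _ ≤ _ := by
        rw [sq, lintegral_add_left hm]
        gcongr
        · exact le_add_self
        · exact le_self_add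

lemma sob_two (v : Rn 2 → ℂ) (hv : ContDiff ℝ 1 v) (hc : HasCompactSupport v) :
    ∫⁻ x, ‖v x‖ₑ ^ 2 ≤ (lintegralPowLePowLIntegralFDerivConst (volume : Measure (Rn 2)) 2) * (∫⁻ x, (‖v x‖ₑ + ‖fderiv ℝ v x‖ₑ)) ^ 2 := by
  have h := lintegral_pow_le_pow_lintegral_fderiv (volume : Measure (Rn 2)) hv hc (p := 2) (by
    rw [finrank_euclideanSpace_fin]
    exact_mod_cast Real.HolderConjugate.two_two)
  simp only [ENNReal.rpow_two] at h
  refine h.trans ?_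
  gcongr
  exact le_add_self

lemma sob_low {N : ℕ} (hN : N = 1 ∨ N = 2) : ∃ C : NNReal, ∀ v : Rn N → ℂ, ContDiff ℝ 1 v →
    HasCompactSupport v → ∫⁻ x, ‖v x‖ₑ ^ 2 ≤ C * (∫⁻ x, (‖v x‖ₑ + ‖fderiv ℝ v x‖ₑ)) ^ 2 := by
  rcases hN with rfl | rfl
  · exact ⟨1, fun v hv hc => by simpa using sob_one v hv hc⟩
  · exact ⟨_, sob_two⟩

lemma cs_lintegral {α : Type*} [MeasurableSpace α] (μ : Measure α) (f g : α → ℝ≥0∞) (hf : AEMeasurable f μ)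
    (hg : AEMeasurable g μ) :
    (∫⁻ x, f x * g x ∂μ) ^ 2 ≤ (∫⁻ x, f x ^ 2 ∂μ) * ∫⁻ x, g x ^ 2 ∂μ := by
  have h := ENNReal.lintegral_mul_le_Lp_mul_Lq μ Real.HolderConjugate.two_two hf hg
  simp only [Pi.mul_apply, ENNReal.rpow_two] at h
  calc (∫⁻ x, f x * g x ∂μ) ^ 2 ≤ _ := pow_le_pow_left' h 2
    _ = _ := by
      rw [mul_pow]
      simp only [← ENNReal.rpow_natCast, ← ENNReal.rpow_mul]
      norm_num

lemma sob_low_pow {N : ℕ} (hN : N = 1 ∨ N = 2) (m : ℕ) : ∃ C : NNReal, ∀ w : Rn N → ℂ,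
    ContDiff ℝ 1 w → HasCompactSupport w → ∫⁻ x, ‖w x‖ₑ ^ (2 * (m + 1)) ≤ C * EH1 w ^ (m + 1) := by
  obtain ⟨C₀, hC₀⟩ := sob_low hN
  induction m with
  | zero =>
    refine ⟨1, fun w _ _ => ?_⟩
    simp only [EH1, zero_add, mul_one, ENNReal.coe_one, one_mul, pow_one]
    exact lintegral_mono fun x => le_self_add
  | succ m ih =>
    obtain ⟨C, hC⟩ := ih
    refine ⟨C₀ * ((m + 2) ^ 2 * (C * 2)), fun w hw hc => ?_⟩
    have hwc : Continuous w := hw.continuous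
    have hdc : Continuous (fderiv ℝ w) := hw.continuous_fderiv one_ne_zero
    have h := hC₀ (fun x => w x ^ (m + 2)) (hw.pow _) (by
      refine hc.comp_left (g := fun z : ℂ => z ^ (m + 2)) (by simp))
    have hd : ∀ x, ‖fderiv ℝ (fun x => w x ^ (m + 2)) x‖ₑ ≤ (m + 2 : ℝ≥0∞) * (‖w x‖ₑ ^ (m + 1) * ‖fderiv ℝ w x‖ₑ) := by
      intro x
      have h1 : HasFDerivAt w (fderiv ℝ w x) x := (hw.differentiable one_ne_zero x).hasFDerivAt
      have h2 := h1.pow (m + 2)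
      rw [h2.fderiv, enorm_smul]
      have : ‖(m + 2) • w x ^ (m + 2 - 1)‖ₑ = (m + 2 : ℝ≥0∞) * ‖w x‖ₑ ^ (m + 1) := by
        rw [nsmul_eq_mul, enorm_mul, enorm_pow]
        congr 1
        rw [← ofReal_norm, Complex.norm_natCast]
        rw [ENNReal.ofReal_natCast]; push_cast; rfl
      rw [this, mul_assoc]
    have hb : ∫⁻ x, (‖w x ^ (m + 2)‖ₑ + ‖fderiv ℝ (fun x => w x ^ (m + 2)) x‖ₑ) ≤
        (m + 2 : ℝ≥0∞) * ∫⁻ x, ‖w x‖ₑ ^ (m + 1) * (‖w x‖ₑ + ‖fderiv ℝ w x‖ₑ) := by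
      rw [← lintegral_const_mul _ (by fun_prop)]
      apply lintegral_mono
      intro x
      calc _ ≤ (m + 2 : ℝ≥0∞) * (‖w x‖ₑ ^ (m + 1) * ‖w x‖ₑ) + (m + 2 : ℝ≥0∞) * (‖w x‖ₑ ^ (m + 1) * ‖fderiv ℝ w x‖ₑ) := by
            refine add_le_add ?_ (hd x)
            rw [enorm_pow, pow_succ]
            conv_lhs => rw [← one_mul (_ * _)]
            gcongr
            exact le_add_left (by norm_num)
        _ = _ := by ring
    have hE : ∫⁻ x, (‖w x‖ₑ + ‖fderiv ℝ w x‖ₑ) ^ 2 ≤ 2 * EH1 w := by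
      rw [EH1, ← lintegral_const_mul _ (by fun_prop)]
      apply lintegral_mono
      intro x
      exact enn_add_sq _ _
    calc ∫⁻ x, ‖w x‖ₑ ^ (2 * (m + 1 + 1)) = ∫⁻ x, ‖w x ^ (m + 2)‖ₑ ^ 2 := by
          congr with x; rw [enorm_pow, ← pow_mul]; ring_nf
      _ ≤ _ := h
      _ ≤ C₀ * ((m + 2 : ℝ≥0∞) * ∫⁻ x, ‖w x‖ₑ ^ (m + 1) * (‖w x‖ₑ + ‖fderiv ℝ w x‖ₑ)) ^ 2 := by
          gcongr
      _ ≤ C₀ * ((m + 2 : ℝ≥0∞) ^ 2 * ((∫⁻ x, (‖w x‖ₑ ^ (m + 1)) ^ 2) * ∫⁻ x, (‖w x‖ₑ + ‖fderiv ℝ w x‖ₑ) ^ 2)) := by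
          rw [mul_pow]
          gcongr
          exact cs_lintegral _ _ _ (by fun_prop) (by fun_prop)
      _ ≤ C₀ * ((m + 2 : ℝ≥0∞) ^ 2 * ((C * EH1 w ^ (m + 1)) * (2 * EH1 w))) := by
          gcongr
          refine le_trans (le_of_eq ?_) (hC w hw hc)
          congr with x; rw [← pow_mul]; ring_nf
      _ = _ := by push_cast; ring

lemma sob_high {N : ℕ} (hN : 3 ≤ N) : ∃ C : NNReal, ∀ w : Rn N → ℂ, ContDiff ℝ 1 w →
    HasCompactSupport w → ∫⁻ x, ‖w x‖ₑ ^ (2 * (N : ℝ) / ((N : ℝ) - 2)) ≤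
      C * EH1 w ^ ((2 * (N : ℝ) / ((N : ℝ) - 2)) / 2) := by
  have hN' : (3 : ℝ) ≤ N := by exact_mod_cast hN
  set r : ℝ := 2 * (N : ℝ) / ((N : ℝ) - 2) with hr
  have hr0 : 0 < r := by rw [hr]; apply div_pos <;> linarith
  set C := eLpNormLESNormFDerivOfEqInnerConst (volume : Measure (Rn N)) 2
  refine ⟨C ^ r, fun w hw hc => ?_⟩
  have h := eLpNorm_le_eLpNorm_fderiv_of_eq_inner (volume : Measure (Rn N)) hw hc (p := 2)
    (p' := r.toNNReal) (by norm_num) (by rw [finrank_euclideanSpace_fin]; omega) (by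
      rw [finrank_euclideanSpace_fin]
      have : (N : ℝ) - 2 ≠ 0 := by linarith
      rw [Real.coe_toNNReal _ hr0.le, hr]
      push_cast
      field_simp)
  have hp0 : ((r.toNNReal : NNReal) : ℝ≥0∞) ≠ 0 := by
    simpa using hr0
  rw [eLpNorm_eq_lintegral_rpow_enorm_toReal hp0 (by simp),
    eLpNorm_eq_lintegral_rpow_enorm_toReal (by simp) (by simp)] at h
  simp only [ENNReal.coe_toReal, Real.coe_toNNReal _ hr0.le] at h
  have h2 := ENNReal.rpow_le_rpow h hr0.le
  rw [← ENNReal.rpow_mul, one_div, inv_mul_cancel₀ hr0.ne', ENNReal.rpow_one,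
    ENNReal.mul_rpow_of_nonneg _ _ hr0.le, ← ENNReal.rpow_mul] at h2
  refine h2.trans ?_
  rw [ENNReal.coe_rpow_of_nonneg _ hr0.le]
  simp only [NNReal.coe_ofNat, ENNReal.rpow_two]
  gcongr ?_ * ?_
  · simp [C]
  rw [one_div_mul_eq_div]
  gcongr
  unfold EH1
  exact lintegral_mono fun x => le_add_self

lemma sob_c {N : ℕ} (hN : 1 ≤ N) (p : ℝ) (hp : Subcrit N p) : ∃ r : ℝ, 2 < r ∧ p + 1 ≤ r ∧
    ∃ C : NNReal, ∀ w : Rn N → ℂ, ContDiff ℝ 1 w →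
    HasCompactSupport w → ∫⁻ x, ‖w x‖ₑ ^ r ≤ C * EH1 w ^ (r / 2) := by
  by_cases h3 : 3 ≤ N
  · refine ⟨2 * (N : ℝ) / ((N : ℝ) - 2), ?_, ?_, sob_high h3⟩
    · have hN' : (3 : ℝ) ≤ N := by exact_mod_cast h3
      rw [lt_div_iff₀] <;> linarith
    · have := hp.2 h3
      linarith
  · obtain ⟨m, hm⟩ := exists_nat_gt (p + 1)
    obtain ⟨C, hC⟩ := sob_low_pow (N := N) (by omega) m
    refine ⟨((2 * (m + 1) : ℕ) : ℝ), ?_, ?_, C, fun w hw hc => ?_⟩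
    · have := hp.1; push_cast; linarith
    · have := hp.1; push_cast; linarith
    · have := hC w hw hc
      have e : ((2 * (m + 1) : ℕ) : ℝ) / 2 = ((m + 1 : ℕ) : ℝ) := by push_cast; ring
      rw [e]
      simp only [ENNReal.rpow_natCast]
      exact this

lemma cutoff {N : ℕ} : ∃ (η : ℕ → Rn N → ℝ) (K : NNReal), (∀ k, ContDiff ℝ 1 (η k)) ∧
    (∀ k, HasCompactSupport (η k)) ∧ (∀ k x, ‖η k x‖ₑ ≤ 1) ∧ (∀ k x, ‖fderiv ℝ (η k) x‖ₑ ≤ K) ∧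
    ∀ x, ∀ᶠ k in Filter.atTop, η k x = 1 := by
  let f : ContDiffBump (0 : Rn N) := ⟨1, 2, by norm_num, by norm_num⟩
  have hf : ContDiff ℝ 1 f := f.contDiff
  have hdc : Continuous (fderiv ℝ f) := hf.continuous_fderiv one_ne_zero
  obtain ⟨K, hK⟩ := (f.hasCompactSupport.fderiv ℝ).exists_bound_of_continuous hdc
  have hcd : ∀ k : ℕ, ContDiff ℝ 1 (fun x : Rn N => f (((k : ℝ) + 1)⁻¹ • x)) := by
    intro k
    exact hf.comp (contDiff_const_smul _)
  refine ⟨fun k x => f (((k : ℝ) + 1)⁻¹ • x), K.toNNReal, hcd, ?_, ?_, ?_, ?_⟩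
  · intro k
    exact f.hasCompactSupport.comp_smul (by positivity)
  · intro k x
    rw [← ofReal_norm, ENNReal.ofReal_le_one, Real.norm_of_nonneg f.nonneg]
    exact f.le_one
  · intro k x
    have h1 : HasFDerivAt f (fderiv ℝ f (((k : ℝ) + 1)⁻¹ • x)) (((k : ℝ) + 1)⁻¹ • x) :=
      (hf.differentiable one_ne_zero _).hasFDerivAt
    have h2 : HasFDerivAt (fun x : Rn N => ((k : ℝ) + 1)⁻¹ • x) (((k : ℝ) + 1)⁻¹ • ContinuousLinearMap.id ℝ (Rn N)) x :=
      (hasFDerivAt_id (𝕜 := ℝ) x).const_smul (((k : ℝ) + 1)⁻¹)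
    have h3 := (h1.comp x h2).fderiv
    have h4 : fderiv ℝ (fun x : Rn N => f (((k : ℝ) + 1)⁻¹ • x)) x = _ := h3
    rw [h4, ← ofReal_norm]
    change _ ≤ ENNReal.ofReal K
    apply ENNReal.ofReal_le_ofReal
    rw [ContinuousLinearMap.comp_smul, ContinuousLinearMap.comp_id, norm_smul]
    have : ‖((k : ℝ) + 1)⁻¹‖ ≤ 1 := by
      rw [Real.norm_of_nonneg (by positivity)]
      apply inv_le_one_of_one_le₀
      have : (0 : ℝ) ≤ k := by positivity
      linarith
    calc _ ≤ 1 * ‖fderiv ℝ f (((k : ℝ) + 1)⁻¹ • x)‖ := by gcongr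
      _ ≤ K := by rw [one_mul]; exact hK _
  · intro x
    obtain ⟨n, hn⟩ := exists_nat_gt ‖x‖
    filter_upwards [Filter.eventually_ge_atTop n] with k hk
    apply f.one_of_mem_closedBall
    rw [mem_closedBall_zero_iff, norm_smul, Real.norm_of_nonneg (by positivity)]
    change _ ≤ (1 : ℝ)
    rw [inv_mul_le_iff₀ (by positivity)]
    have : (n : ℝ) ≤ k := by exact_mod_cast hk
    linarith

lemma sob_full {N : ℕ} (hN : 1 ≤ N) (p : ℝ) (hp : Subcrit N p) : ∃ r : ℝ, 2 < r ∧ p + 1 ≤ r ∧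
    ∃ C : NNReal, ∀ a : Rn N → ℂ, ContDiff ℝ 1 a → ∫⁻ x, ‖a x‖ₑ ^ r ≤ C * EH1 a ^ (r / 2) := by
  obtain ⟨r, hr2, hpr, C, hC⟩ := sob_c hN p hp
  obtain ⟨η, K, hη1, hη2, hη3, hη4, hη5⟩ := cutoff (N := N)
  have hr0 : 0 < r := by linarith
  refine ⟨r, hr2, hpr, C * (1 + 2 * (1 + K ^ 2)) ^ (r / 2), fun a ha => ?_⟩
  have hac : Continuous a := ha.continuous
  have hdc : Continuous (fderiv ℝ a) := ha.continuous_fderiv one_ne_zero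
  have hE : ∀ k, EH1 (fun x => (η k x) • a x) ≤ (1 + 2 * (1 + K ^ 2)) * EH1 a := by
    intro k
    unfold EH1
    rw [← lintegral_const_mul _ (by fun_prop)]
    apply lintegral_mono
    intro x
    have h1 : HasFDerivAt (η k) (fderiv ℝ (η k) x) x :=
      ((hη1 k).differentiable one_ne_zero _).hasFDerivAt
    have h2 : HasFDerivAt a (fderiv ℝ a x) x := (ha.differentiable one_ne_zero _).hasFDerivAt
    have h3 := (h1.smul h2).fderiv
    have h4 : fderiv ℝ (fun x => (η k x) • a x) x = _ := h3
    have h5 : ‖fderiv ℝ (fun x => (η k x) • a x) x‖ₑ ≤ ‖fderiv ℝ a x‖ₑ + K * ‖a x‖ₑ := by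
      rw [h4]
      refine (enorm_add_le (E := Rn N →L[ℝ] ℂ) _ _).trans ?_
      refine add_le_add ?_ ?_
      · rw [enorm_smul]
        calc _ ≤ 1 * ‖fderiv ℝ a x‖ₑ := by gcongr; exact hη3 k x
          _ = _ := one_mul _
      · calc _ ≤ ‖fderiv ℝ (η k) x‖ₑ * ‖a x‖ₑ := by
              rw [← ofReal_norm, ← ofReal_norm, ← ofReal_norm, ← ENNReal.ofReal_mul (norm_nonneg _)]
              apply ENNReal.ofReal_le_ofReal
              rw [ContinuousLinearMap.norm_smulRight_apply]
          _ ≤ _ := by gcongr; exact hη4 k x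
    have h6 : ‖η k x • a x‖ₑ ≤ ‖a x‖ₑ := by
      rw [enorm_smul]
      calc _ ≤ 1 * ‖a x‖ₑ := by gcongr; exact hη3 k x
          _ = _ := one_mul _
    calc _ ≤ ‖a x‖ₑ ^ 2 + (‖fderiv ℝ a x‖ₑ + K * ‖a x‖ₑ) ^ 2 :=
            add_le_add (pow_le_pow_left' h6 2) (pow_le_pow_left' h5 2)
      _ ≤ ‖a x‖ₑ ^ 2 + 2 * (‖fderiv ℝ a x‖ₑ ^ 2 + (K * ‖a x‖ₑ) ^ 2) := by
          gcongr; exact enn_add_sq _ _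
      _ ≤ ‖a x‖ₑ ^ 2 + 2 * (‖fderiv ℝ a x‖ₑ ^ 2 + (K * ‖a x‖ₑ) ^ 2) +
          (2 * ‖a x‖ₑ ^ 2 + (1 + 2 * K ^ 2) * ‖fderiv ℝ a x‖ₑ ^ 2) := le_self_add
      _ = _ := by ring
  calc ∫⁻ x, ‖a x‖ₑ ^ r ≤ ∫⁻ x, Filter.liminf (fun k => ‖η k x • a x‖ₑ ^ r) Filter.atTop := by
        apply lintegral_mono
        intro x
        have : Filter.Tendsto (fun k => ‖η k x • a x‖ₑ ^ r) Filter.atTop (nhds (‖a x‖ₑ ^ r)) := by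
          apply tendsto_const_nhds.congr'
          filter_upwards [hη5 x] with k hk
          rw [hk, one_smul]
        exact this.liminf_eq.ge
    _ ≤ Filter.liminf (fun k => ∫⁻ x, ‖η k x • a x‖ₑ ^ r) Filter.atTop := by
        apply lintegral_liminf_le
        intro k
        have := (hη1 k).continuous
        fun_prop
    _ ≤ Filter.liminf (fun _ : ℕ => (C : ℝ≥0∞) * ((1 + 2 * (1 + K ^ 2)) * EH1 a) ^ (r / 2)) Filter.atTop := by
        refine Filter.liminf_le_liminf ?_
        refine Filter.Eventually.of_forall fun k => ?_
        refine (hC (fun x => η k x • a x) ((hη1 k).smul ha) ((hη2 k).smul_right)).trans ?_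
        gcongr
        exact hE k
    _ = _ := by
        rw [Filter.liminf_const, ENNReal.mul_rpow_of_nonneg _ _ (by positivity), ← mul_assoc,
          ENNReal.coe_mul, ENNReal.coe_rpow_of_nonneg _ (by positivity)]
        push_cast
        rfl
end Aux1


section Aux2

lemma H1bound_le {p : ℝ} {f : ℂ → ℂ} (hp : 1 < p) (h : H1bound p f) :
    ∃ C : ℝ, 0 ≤ C ∧ ∀ z, ‖fderiv ℝ f z‖ ≤ C * ‖z‖ ^ (p - 1) := by
  obtain ⟨-, -, h0, C, hA, hB⟩ := h
  refine ⟨|C|, abs_nonneg _, fun z => ?_⟩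
  have : ‖fderiv ℝ f z‖ ≤ C * ‖z‖ ^ (p - 1) := by
    rcases le_or_gt p 2 with h | h
    · simpa [h0] using hA h z 0
    · have := hB h z 0
      rw [h0] at this
      simp only [norm_zero, sub_zero] at this
      rw [Real.zero_rpow (by linarith), add_zero] at this
      refine this.trans (le_of_eq ?_)
      rw [mul_assoc]
      congr 1
      rcases eq_or_ne z 0 with rfl | hz
      · simp [Real.zero_rpow (show p - 1 ≠ 0 by linarith)]
      · rw [show p - 1 = (p - 2) + 1 by ring, Real.rpow_add_one (by simpa using hz)]
  refine this.trans ?_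
  gcongr
  exact le_abs_self C

lemma rpow_bound {δ q s t : ℝ} (hδ : 0 < δ) (hq : 0 ≤ q) (hqs : q ≤ s) (ht : δ ≤ t) :
    t ^ q ≤ δ ^ q * (δ ^ s)⁻¹ * t ^ s := by
  have h1 : 1 ≤ t / δ := by rw [le_div_iff₀ hδ]; linarith
  have h2 := Real.rpow_le_rpow_of_exponent_le h1 hqs
  have ht0 : 0 ≤ t := by linarith
  rw [Real.div_rpow ht0 hδ.le, Real.div_rpow ht0 hδ.le] at h2
  have := Real.rpow_pos_of_pos hδ q
  have := Real.rpow_pos_of_pos hδ s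
  rw [div_le_iff₀ (by assumption)] at h2
  calc t ^ q ≤ _ := h2
    _ = _ := by field_simp

lemma Df_bound {N : ℕ} {g : ℝ → ℝ} {f₁ f₂ : ℂ → ℂ} {p₁ p₂ : ℝ} (h1 : H1full N g f₁ f₂ p₁ p₂)
    (s : ℝ) (hs1 : p₁ - 1 ≤ s) (hs2 : p₂ - 1 ≤ s) (ε : ℝ) (hε : 0 < ε) :
    ∃ C : ℝ, 0 ≤ C ∧ ∀ z, ‖fderiv ℝ (fpot g) z‖ ≤ ε + C * ‖z‖ ^ s := by
  obtain ⟨C1, hC1, hb1⟩ := H1bound_le h1.sub1.1 h1.bd1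
  obtain ⟨C2, hC2, hb2⟩ := H1bound_le h1.sub2.1 h1.bd2
  have hfun : fpot g = fun z => f₁ z + f₂ z := funext h1.hsum
  have hD : ∀ z, fderiv ℝ (fpot g) z = fderiv ℝ f₁ z + fderiv ℝ f₂ z := by
    intro z
    rw [hfun]
    exact fderiv_add (h1.bd1.1.differentiable one_ne_zero z) (h1.bd2.1.differentiable one_ne_zero z)
  have hcont : Continuous (fderiv ℝ (fpot g)) := by
    rw [hfun]; exact (h1.bd1.1.add h1.bd2.1).continuous_fderiv one_ne_zero
  have h0 : fderiv ℝ (fpot g) 0 = 0 := by rw [hD, h1.bd1.2.2.1, h1.bd2.2.2.1, add_zero]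
  obtain ⟨δ, hδ, hδ'⟩ := Metric.continuous_iff.1 hcont 0 ε hε
  have q1 := h1.sub1.1
  have q2 := h1.sub2.1
  refine ⟨C1 * (δ ^ (p₁ - 1) * (δ ^ s)⁻¹) + C2 * (δ ^ (p₂ - 1) * (δ ^ s)⁻¹), by positivity, fun z => ?_⟩
  rcases lt_or_ge ‖z‖ δ with hz | hz
  · have := hδ' z (by simpa using hz)
    rw [h0, dist_zero_right] at this
    have : 0 ≤ (C1 * (δ ^ (p₁ - 1) * (δ ^ s)⁻¹) + C2 * (δ ^ (p₂ - 1) * (δ ^ s)⁻¹)) * ‖z‖ ^ s := by positivity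
    linarith
  · rw [hD]
    refine (norm_add_le _ _).trans ?_
    have e1 := mul_le_mul_of_nonneg_left (rpow_bound hδ (by linarith) hs1 hz) hC1
    have e2 := mul_le_mul_of_nonneg_left (rpow_bound hδ (by linarith) hs2 hz) hC2
    have := hb1 z
    have := hb2 z
    rw [add_mul]
    linarith

lemma tail_tendsto {N : ℕ} (F : Rn N → ℝ≥0∞) (hF : Measurable F) (hfin : ∫⁻ x, F x ≠ ∞) :
    Filter.Tendsto (fun n : ℕ => ∫⁻ x in (Metric.closedBall 0 (n : ℝ))ᶜ, F x) Filter.atTop (nhds 0) := by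
  have : (fun n : ℕ => ∫⁻ x in (Metric.closedBall 0 (n : ℝ))ᶜ, F x) =
      fun n : ℕ => ∫⁻ x, (Metric.closedBall 0 (n : ℝ))ᶜ.indicator F x := by
    ext n; rw [lintegral_indicator Metric.isClosed_closedBall.measurableSet.compl]
  rw [this]
  have h := tendsto_lintegral_of_dominated_convergence (μ := (volume : Measure (Rn N)))
    (F := fun n : ℕ => (Metric.closedBall 0 (n : ℝ))ᶜ.indicator F) (f := fun _ => 0) F
    (fun n => hF.indicator Metric.isClosed_closedBall.measurableSet.compl)
    (fun n => Filter.Eventually.of_forall fun x => Set.indicator_le_self _ _ x) hfin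
    (Filter.Eventually.of_forall fun x => by
      apply tendsto_const_nhds.congr'
      obtain ⟨n, hn⟩ := exists_nat_gt ‖x‖
      filter_upwards [Filter.eventually_ge_atTop n] with k hk
      have : (n : ℝ) ≤ k := by exact_mod_cast hk
      rw [Set.indicator_of_notMem]
      simp only [Set.mem_compl_iff, not_not, mem_closedBall_zero_iff]
      linarith)
  simpa using h

lemma tail {N : ℕ} (hN : 1 ≤ N) {g : ℝ → ℝ} {f₁ f₂ : ℂ → ℂ} {p₁ p₂ : ℝ}
    (h1 : H1full N g f₁ f₂ p₁ p₂) (φ : Rn N → ℂ) (hφ : ContDiff ℝ 1 φ) (hE : EH1 φ ≠ ∞)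
    (ε : ℝ) (hε : 0 < ε) :
    ∃ R : ℝ, ∀ a : Rn N → ℂ, ContDiff ℝ 1 a →
      ∫⁻ x in (Metric.closedBall 0 R)ᶜ, ‖fderiv ℝ (fpot g) (φ x)‖ₑ * ‖a x‖ₑ ^ 2
        ≤ ENNReal.ofReal ε * EH1 a := by
  have hp : Subcrit N (max p₁ p₂) := by
    rcases max_choice p₁ p₂ with h | h <;> rw [h]
    exacts [h1.sub1, h1.sub2]
  obtain ⟨r, hr2, hpr, C, hC⟩ := sob_full hN _ hp
  have hr0 : 0 < r := by linarith
  have hm1 := le_max_left p₁ p₂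
  have hm2 := le_max_right p₁ p₂
  obtain ⟨D, hD0, hD⟩ := Df_bound h1 (r - 2) (by linarith) (by linarith) (ε / 2) (by linarith)
  have hfinφ : ∫⁻ x, ‖φ x‖ₑ ^ r ≠ ∞ := by
    refine ne_top_of_le_ne_top ?_ (hC φ hφ)
    exact ENNReal.mul_ne_top (by simp) (ENNReal.rpow_ne_top_of_nonneg (by linarith) hE)
  have hφc := hφ.continuous
  have ht := tail_tendsto (fun x => ‖φ x‖ₑ ^ r) (by fun_prop) hfinφ
  have ht2 : Filter.Tendsto (fun n : ℕ => ENNReal.ofReal D * ((C : ℝ≥0∞) ^ (2 / r) *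
      (∫⁻ x in (Metric.closedBall 0 (n : ℝ))ᶜ, ‖φ x‖ₑ ^ r) ^ ((r - 2) / r))) Filter.atTop (nhds 0) := by
    have a1 := (ENNReal.continuous_rpow_const (y := (r - 2) / r)).tendsto 0 |>.comp ht
    rw [ENNReal.zero_rpow_of_pos (div_pos (by linarith) hr0)] at a1
    have a2 := ENNReal.Tendsto.const_mul (a := (C : ℝ≥0∞) ^ (2 / r)) a1
      (Or.inr (ENNReal.rpow_ne_top_of_nonneg (by positivity) (by simp)))
    have a3 := ENNReal.Tendsto.const_mul (a := ENNReal.ofReal D) a2 (Or.inr (by simp))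
    simpa using a3
  obtain ⟨n, hn⟩ := (ht2.eventually_le_const (show (0 : ℝ≥0∞) < ENNReal.ofReal (ε / 2) by simpa using hε)).exists
  refine ⟨n, fun a ha => ?_⟩
  have hac := ha.continuous
  set S := (Metric.closedBall (0 : Rn N) (n : ℝ))ᶜ
  have hhol : ∫⁻ x in S, ‖φ x‖ₑ ^ (r - 2) * ‖a x‖ₑ ^ 2 ≤
      (∫⁻ x in S, ‖φ x‖ₑ ^ r) ^ ((r - 2) / r) * (∫⁻ x in S, ‖a x‖ₑ ^ r) ^ (2 / r) := by
    have hpq : Real.HolderConjugate (r / (r - 2)) (r / 2) := by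
      rw [Real.holderConjugate_iff]
      have : r - 2 ≠ 0 := by linarith
      refine ⟨by rw [lt_div_iff₀] <;> linarith, ?_⟩
      field_simp; ring
    have h := ENNReal.lintegral_mul_le_Lp_mul_Lq (volume.restrict S) hpq
      (f := fun x => ‖φ x‖ₑ ^ (r - 2)) (g := fun x => ‖a x‖ₑ ^ 2) (by fun_prop) (by fun_prop)
    simp only [Pi.mul_apply, one_div_div] at h
    refine h.trans (le_of_eq ?_)
    congr 3
    · ext x; rw [← ENNReal.rpow_mul]; congr 1
      have : r - 2 ≠ 0 := by linarith
      field_simp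
    · ext x; rw [← ENNReal.rpow_natCast, ← ENNReal.rpow_mul]; congr 1
      push_cast; field_simp
  have hpt : ∀ x, ‖fderiv ℝ (fpot g) (φ x)‖ₑ ≤ ENNReal.ofReal (ε / 2) + ENNReal.ofReal D * ‖φ x‖ₑ ^ (r - 2) := by
    intro x
    rw [← ofReal_norm, ← ofReal_norm, ENNReal.ofReal_rpow_of_nonneg (norm_nonneg _) (by linarith),
      ← ENNReal.ofReal_mul hD0, ← ENNReal.ofReal_add (by linarith) (by positivity)]
    exact ENNReal.ofReal_le_ofReal (hD _)
  calc ∫⁻ x in S, ‖fderiv ℝ (fpot g) (φ x)‖ₑ * ‖a x‖ₑ ^ 2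
      ≤ ∫⁻ x in S, (ENNReal.ofReal (ε / 2) * ‖a x‖ₑ ^ 2 + ENNReal.ofReal D * (‖φ x‖ₑ ^ (r - 2) * ‖a x‖ₑ ^ 2)) := by
        apply lintegral_mono; intro x
        calc _ ≤ (ENNReal.ofReal (ε / 2) + ENNReal.ofReal D * ‖φ x‖ₑ ^ (r - 2)) * ‖a x‖ₑ ^ 2 := by
              simp only []; gcongr; exact hpt x
          _ = _ := by ring
    _ = ENNReal.ofReal (ε / 2) * (∫⁻ x in S, ‖a x‖ₑ ^ 2) +
        ENNReal.ofReal D * ∫⁻ x in S, ‖φ x‖ₑ ^ (r - 2) * ‖a x‖ₑ ^ 2 := by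
        rw [lintegral_add_left (by fun_prop), lintegral_const_mul _ (by fun_prop),
          lintegral_const_mul _ (by fun_prop)]
    _ ≤ ENNReal.ofReal (ε / 2) * EH1 a + ENNReal.ofReal (ε / 2) * EH1 a := by
        refine add_le_add ?_ ?_
        · gcongr
          refine (setLIntegral_le_lintegral _ _).trans ?_
          unfold EH1
          exact lintegral_mono fun x => le_self_add
        · calc _ ≤ ENNReal.ofReal D * ((∫⁻ x in S, ‖φ x‖ₑ ^ r) ^ ((r - 2) / r) * (∫⁻ x in S, ‖a x‖ₑ ^ r) ^ (2 / r)) := by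
                gcongr
            _ ≤ ENNReal.ofReal D * ((∫⁻ x in S, ‖φ x‖ₑ ^ r) ^ ((r - 2) / r) * (C * EH1 a ^ (r / 2)) ^ (2 / r)) := by
                gcongr
                exact (setLIntegral_le_lintegral _ _).trans (hC a ha)
            _ = (ENNReal.ofReal D * ((C : ℝ≥0∞) ^ (2 / r) * (∫⁻ x in S, ‖φ x‖ₑ ^ r) ^ ((r - 2) / r))) * EH1 a := by
                rw [ENNReal.mul_rpow_of_nonneg _ _ (by positivity), ← ENNReal.rpow_mul,
                  show r / 2 * (2 / r) = 1 by field_simp, ENNReal.rpow_one]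
                ring
            _ ≤ _ := by gcongr
    _ = ENNReal.ofReal ε * EH1 a := by
        rw [← add_mul, ← ENNReal.ofReal_add (by linarith) (by linarith)]; congr 2; ring

lemma trans_est {N : ℕ} (a : Rn N → ℂ) (ha : ContDiff ℝ 1 a) (y : Rn N) :
    ∫⁻ x, ‖a (x + y) - a x‖ₑ ^ 2 ≤ ‖y‖ₑ ^ 2 * ∫⁻ x, ‖fderiv ℝ a x‖ₑ ^ 2 := by
  have hdc : Continuous (fderiv ℝ a) := ha.continuous_fderiv one_ne_zero
  have hpt : ∀ x, ‖a (x + y) - a x‖ₑ ^ 2 ≤ ‖y‖ₑ ^ 2 * ∫⁻ t in Set.Ioc (0:ℝ) 1, ‖fderiv ℝ a (x + t • y)‖ₑ ^ 2 := by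
    intro x
    have hder : ∀ t : ℝ, HasDerivAt (fun t : ℝ => a (x + t • y)) (fderiv ℝ a (x + t • y) y) t := by
      intro t
      have h1 : HasFDerivAt a (fderiv ℝ a (x + t • y)) (x + t • y) :=
        (ha.differentiable one_ne_zero _).hasFDerivAt
      have h2 : HasDerivAt (fun t : ℝ => x + t • y) y t := by
        simpa using ((hasDerivAt_id t).smul_const y).const_add x
      exact h1.comp_hasDerivAt t h2
    have hint : ∫ t in (0:ℝ)..1, fderiv ℝ a (x + t • y) y = a (x + y) - a x := by
      rw [intervalIntegral.integral_eq_sub_of_hasDerivAt (fun t _ => hder t)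
        (Continuous.intervalIntegrable (by fun_prop) _ _)]
      simp
    rw [← hint, intervalIntegral.integral_of_le zero_le_one]
    calc _ ≤ (∫⁻ t in Set.Ioc (0:ℝ) 1, ‖fderiv ℝ a (x + t • y) y‖ₑ) ^ 2 :=
          pow_le_pow_left' (enorm_integral_le_lintegral_enorm _) 2
      _ ≤ (∫⁻ t in Set.Ioc (0:ℝ) 1, ‖y‖ₑ * ‖fderiv ℝ a (x + t • y)‖ₑ) ^ 2 := by
          apply pow_le_pow_left'
          apply lintegral_mono
          intro t
          simp only []
          rw [mul_comm]
          exact ContinuousLinearMap.le_opENorm _ _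
      _ ≤ (∫⁻ t in Set.Ioc (0:ℝ) 1, ‖y‖ₑ ^ 2) * ∫⁻ t in Set.Ioc (0:ℝ) 1, ‖fderiv ℝ a (x + t • y)‖ₑ ^ 2 := 
          cs_lintegral _ _ _ (by fun_prop) (by fun_prop)
      _ = _ := by simp
  calc _ ≤ ∫⁻ x, ‖y‖ₑ ^ 2 * ∫⁻ t in Set.Ioc (0:ℝ) 1, ‖fderiv ℝ a (x + t • y)‖ₑ ^ 2 := lintegral_mono hpt
    _ = ‖y‖ₑ ^ 2 * ∫⁻ x, ∫⁻ t in Set.Ioc (0:ℝ) 1, ‖fderiv ℝ a (x + t • y)‖ₑ ^ 2 := by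
        rw [lintegral_const_mul']
        simp
    _ = ‖y‖ₑ ^ 2 * ∫⁻ t in Set.Ioc (0:ℝ) 1, ∫⁻ x, ‖fderiv ℝ a (x + t • y)‖ₑ ^ 2 := by
        rw [lintegral_lintegral_swap]
        apply Measurable.aemeasurable
        apply Continuous.measurable
        unfold Function.uncurry
        fun_prop
    _ = ‖y‖ₑ ^ 2 * ∫⁻ t in Set.Ioc (0:ℝ) 1, ∫⁻ x, ‖fderiv ℝ a x‖ₑ ^ 2 := by
        congr 2
        ext t
        exact lintegral_add_right_eq_self (fun x => ‖fderiv ℝ a x‖ₑ ^ 2) (t • y)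
    _ = _ := by simp

/-- uniform probability measure on a ball -/
noncomputable def nuB (N : ℕ) (ε : ℝ) : Measure (Rn N) :=
  (volume (Metric.ball (0 : Rn N) ε))⁻¹ • volume.restrict (Metric.ball 0 ε)

lemma nuB_prob {N : ℕ} {ε : ℝ} (hε : 0 < ε) : IsProbabilityMeasure (nuB N ε) := by
  constructor
  simp only [nuB, Measure.smul_apply, Measure.restrict_apply_univ, smul_eq_mul]
  exact ENNReal.inv_mul_cancel (Metric.measure_ball_pos _ _ hε).ne' measure_ball_lt_top.ne

lemma avg_est {N : ℕ} (a : Rn N → ℂ) (ha : ContDiff ℝ 1 a) {ε : ℝ} (hε : 0 < ε) (S : Set (Rn N)) :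
    ∫⁻ x in S, ‖a x‖ₑ ^ 2 ≤ 2 * (∫⁻ x in S, ‖∫ y, a (x + y) ∂(nuB N ε)‖ₑ ^ 2) +
      2 * ENNReal.ofReal ε ^ 2 * ∫⁻ x, ‖fderiv ℝ a x‖ₑ ^ 2 := by
  have := nuB_prob (N := N) hε
  have hac := ha.continuous
  have hpt : ∀ x, ‖a x‖ₑ ^ 2 ≤ 2 * ‖∫ y, a (x + y) ∂(nuB N ε)‖ₑ ^ 2 +
      2 * ∫⁻ y, ‖a (x + y) - a x‖ₑ ^ 2 ∂(nuB N ε) := by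
    intro x
    have hi : Integrable (fun y => a (x + y)) (nuB N ε) := by
      unfold nuB
      apply Integrable.smul_measure
      · have : IntegrableOn (fun y => a (x + y)) (Metric.closedBall 0 ε) := 
          (Continuous.continuousOn (by fun_prop)).integrableOn_compact (isCompact_closedBall _ _)
        exact this.mono_set Metric.ball_subset_closedBall
      · exact ENNReal.inv_ne_top.2 (Metric.measure_ball_pos _ _ hε).ne'
    have e : a x = (∫ y, a (x + y) ∂(nuB N ε)) + -∫ y, (a (x + y) - a x) ∂(nuB N ε) := by
      rw [integral_sub hi (integrable_const _)]; simp
    calc ‖a x‖ₑ ^ 2 ≤ (‖∫ y, a (x + y) ∂(nuB N ε)‖ₑ + ‖∫ y, (a (x + y) - a x) ∂(nuB N ε)‖ₑ) ^ 2 := by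
          apply pow_le_pow_left'
          conv_lhs => rw [e]
          refine (enorm_add_le _ _).trans ?_
          rw [enorm_neg]
      _ ≤ 2 * (‖∫ y, a (x + y) ∂(nuB N ε)‖ₑ ^ 2 + ‖∫ y, (a (x + y) - a x) ∂(nuB N ε)‖ₑ ^ 2) := enn_add_sq _ _
      _ ≤ 2 * (‖∫ y, a (x + y) ∂(nuB N ε)‖ₑ ^ 2 + ∫⁻ y, ‖a (x + y) - a x‖ₑ ^ 2 ∂(nuB N ε)) := by
          gcongr
          calc _ ≤ (∫⁻ y, 1 * ‖a (x + y) - a x‖ₑ ∂(nuB N ε)) ^ 2 := by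
                simp only [one_mul]
                exact pow_le_pow_left' (enorm_integral_le_lintegral_enorm _) 2
            _ ≤ _ := cs_lintegral _ _ _ (by fun_prop) (by fun_prop)
            _ = _ := by simp
      _ = _ := by ring
  have hm : Measurable fun x => ∫⁻ y, ‖a (x + y) - a x‖ₑ ^ 2 ∂(nuB N ε) := by
    apply Measurable.lintegral_prod_right (f := fun x y : Rn N => ‖a (x + y) - a x‖ₑ ^ 2)
    unfold Function.uncurry
    fun_prop
  calc ∫⁻ x in S, ‖a x‖ₑ ^ 2 ≤ ∫⁻ x in S, (2 * ‖∫ y, a (x + y) ∂(nuB N ε)‖ₑ ^ 2 +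
      2 * ∫⁻ y, ‖a (x + y) - a x‖ₑ ^ 2 ∂(nuB N ε)) := lintegral_mono hpt
    _ = 2 * (∫⁻ x in S, ‖∫ y, a (x + y) ∂(nuB N ε)‖ₑ ^ 2) +
        2 * ∫⁻ x in S, ∫⁻ y, ‖a (x + y) - a x‖ₑ ^ 2 ∂(nuB N ε) := by
        rw [lintegral_add_right _ (hm.const_mul _), lintegral_const_mul' _ _ (by simp), lintegral_const_mul' _ _ (by simp)]
    _ ≤ 2 * (∫⁻ x in S, ‖∫ y, a (x + y) ∂(nuB N ε)‖ₑ ^ 2) +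
        2 * (ENNReal.ofReal ε ^ 2 * ∫⁻ x, ‖fderiv ℝ a x‖ₑ ^ 2) := by
        gcongr
        refine (setLIntegral_le_lintegral _ _).trans ?_
        rw [lintegral_lintegral_swap (by fun_prop)]
        calc _ ≤ ∫⁻ y, (‖y‖ₑ ^ 2 * ∫⁻ x, ‖fderiv ℝ a x‖ₑ ^ 2) ∂(nuB N ε) := lintegral_mono fun y => trans_est a ha y
          _ ≤ ∫⁻ y, (ENNReal.ofReal ε ^ 2 * ∫⁻ x, ‖fderiv ℝ a x‖ₑ ^ 2) ∂(nuB N ε) := by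
              apply lintegral_mono_ae
              unfold nuB
              apply Measure.ae_smul_measure
              filter_upwards [ae_restrict_mem Metric.isOpen_ball.measurableSet] with y hy
              gcongr
              rw [← ofReal_norm]
              apply ENNReal.ofReal_le_ofReal
              simpa using (mem_ball_zero_iff.1 hy).le
          _ = _ := by simp
    _ = _ := by ring
end Aux2


section Aux3

lemma Df_symm (g : ℝ → ℝ) (hf : Differentiable ℝ (fpot g)) (h0 : fderiv ℝ (fpot g) 0 = 0) (z : ℂ) :
    (fderiv ℝ (fpot g) z Complex.I).re = (fderiv ℝ (fpot g) z 1).im := by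
  rcases eq_or_ne z 0 with rfl | hz
  · simp [h0]
  set L := fderiv ℝ (fpot g) z with hL
  have hfd : HasFDerivAt (fpot g) L z := (hf z).hasFDerivAt
  have key1 : ((starRingEnd ℂ) z * L z).im = 0 := by
    have hd1 : HasDerivAt (fun t : ℝ => t • z) z 1 := by
      simpa using (hasDerivAt_id (1:ℝ)).smul_const z
    have hd2 : HasDerivAt (fun t : ℝ => fpot g (t • z)) (L z) 1 := by
      have h' : HasFDerivAt (fpot g) L ((fun t : ℝ => t • z) 1) := by simpa using hfd
      exact h'.comp_hasDerivAt (1:ℝ) hd1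
    have hd3 := Complex.imCLM.hasFDerivAt.comp_hasDerivAt (1:ℝ) (hd2.const_mul ((starRingEnd ℂ) z))
    have hz0 : (Complex.imCLM ∘ fun t : ℝ => (starRingEnd ℂ) z * fpot g (t • z)) = fun _ => (0:ℝ) := by
      ext t
      simp only [Function.comp, fpot, Complex.imCLM_apply, Complex.real_smul]
      have : (starRingEnd ℂ) z * (-((g (Complex.normSq (t * z)) : ℝ) : ℂ) * (t * z)) =
        ((-(g (Complex.normSq (t * z))) * t * Complex.normSq z : ℝ) : ℂ) := by
        push_cast
        rw [← Complex.mul_conj]; ring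
      rw [this, Complex.ofReal_im]
    rw [hz0] at hd3
    have := hd3.unique (hasDerivAt_const _ _)
    simpa using this
  have key2 : ((starRingEnd ℂ) z * L (Complex.I * z)).re = 0 := by
    have hd1 : HasDerivAt (fun t : ℝ => Complex.exp (t * Complex.I) * z) (Complex.I * z) 0 := by
      have h1 : HasDerivAt (fun t : ℝ => (t : ℂ) * Complex.I) (1 * Complex.I) 0 :=
        (Complex.ofRealCLM.hasDerivAt (x := (0:ℝ))).mul_const Complex.I
      have := (h1.cexp).mul_const z
      simpa using this
    have hd2 : HasDerivAt (fun t : ℝ => fpot g (Complex.exp (t * Complex.I) * z)) (L (Complex.I * z)) 0 := by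
      have h' : HasFDerivAt (fpot g) L ((fun t : ℝ => Complex.exp (t * Complex.I) * z) 0) := by simpa using hfd
      exact h'.comp_hasDerivAt (0:ℝ) hd1
    have he : (fun t : ℝ => fpot g (Complex.exp (t * Complex.I) * z)) =
        fun t : ℝ => Complex.exp (t * Complex.I) * fpot g z := by
      ext t
      have : Complex.normSq (Complex.exp (t * Complex.I) * z) = Complex.normSq z := by
        rw [Complex.normSq_mul, Complex.normSq_eq_norm_sq (Complex.exp _), Complex.norm_exp_ofReal_mul_I]
        simp
      simp only [fpot, this]; ring
    rw [he] at hd2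
    have hd3 : HasDerivAt (fun t : ℝ => Complex.exp (t * Complex.I) * fpot g z) (Complex.I * fpot g z) 0 := by
      have h1 : HasDerivAt (fun t : ℝ => (t : ℂ) * Complex.I) (1 * Complex.I) 0 :=
        (Complex.ofRealCLM.hasDerivAt (x := (0:ℝ))).mul_const Complex.I
      have := (h1.cexp).mul_const (fpot g z)
      simpa using this
    rw [hd2.unique hd3]
    have : (starRingEnd ℂ) z * (Complex.I * fpot g z) =
        ((-(g (Complex.normSq z)) * Complex.normSq z : ℝ) : ℂ) * Complex.I := by
      unfold fpot
      push_cast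
      rw [← Complex.mul_conj]; ring
    rw [this]; simp
  have hLz : ∀ w : ℂ, L w = (w.re : ℝ) • L 1 + (w.im : ℝ) • L Complex.I := by
    intro w
    rw [← map_smul, ← map_smul, ← map_add]
    congr 1
    simp [Complex.re_add_im]
  have hn : 0 < z.re ^ 2 + z.im ^ 2 := by
    have := Complex.normSq_pos.2 hz
    rw [Complex.normSq_apply] at this
    nlinarith
  rw [hLz] at key1 key2
  simp only [Complex.mul_re, Complex.mul_im, Complex.conj_re, Complex.conj_im, Complex.add_re, Complex.add_im,
    Complex.real_smul, Complex.ofReal_re, Complex.ofReal_im, Complex.I_re, Complex.I_im] at key1 key2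
  have : (z.re ^ 2 + z.im ^ 2) * ((L Complex.I).re - (L 1).im) = 0 := by
    linear_combination key2 - key1
  rcases mul_eq_zero.1 this with h | h
  · linarith
  · linarith

/-- Localized average functional. -/
noncomputable def Tavg {N : ℕ} (R δ : ℝ) (a : Rn N → ℂ) : ℝ≥0∞ :=
  ∫⁻ x in Metric.closedBall 0 R, ‖∫ y, a (x + y) ∂(nuB N δ)‖ₑ ^ 2

lemma fpot_contDiff {N : ℕ} {g : ℝ → ℝ} {f₁ f₂ : ℂ → ℂ} {p₁ p₂ : ℝ}
    (h1 : H1full N g f₁ f₂ p₁ p₂) : ContDiff ℝ 1 (fpot g) := by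
  rw [show fpot g = fun z => f₁ z + f₂ z from funext h1.hsum]
  exact h1.bd1.1.add h1.bd2.1

lemma fpot_fderiv_zero {N : ℕ} {g : ℝ → ℝ} {f₁ f₂ : ℂ → ℂ} {p₁ p₂ : ℝ}
    (h1 : H1full N g f₁ f₂ p₁ p₂) : fderiv ℝ (fpot g) 0 = 0 := by
  rw [show fpot g = fun z => f₁ z + f₂ z from funext h1.hsum]
  rw [fderiv_fun_add (h1.bd1.1.differentiable one_ne_zero _) (h1.bd2.1.differentiable one_ne_zero _),
    h1.bd1.2.2.1, h1.bd2.2.2.1, add_zero]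

lemma pot_est {N : ℕ} (hN : 1 ≤ N) {g : ℝ → ℝ} {f₁ f₂ : ℂ → ℂ} {p₁ p₂ : ℝ}
    (h1 : H1full N g f₁ f₂ p₁ p₂) (φ : Rn N → ℂ) (hφ : ContDiff ℝ 1 φ) (hE : EH1 φ ≠ ∞)
    (ω : ℝ) (hω : 0 < ω) :
    ∃ R δ K : ℝ, 0 < δ ∧ 0 ≤ K ∧ ∀ a : Rn N → ℂ, ContDiff ℝ 1 a →
      2 * ∫⁻ x, ‖fderiv ℝ (fpot g) (φ x)‖ₑ * ‖a x‖ₑ ^ 2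
        ≤ ENNReal.ofReal (ω / 2) * (∫⁻ x, ‖a x‖ₑ ^ 2) + (∫⁻ x, ‖fderiv ℝ a x‖ₑ ^ 2) +
          ENNReal.ofReal K * Tavg R δ a := by
  obtain ⟨R, hR⟩ := tail hN h1 φ hφ hE (min (1/4) (ω / 4)) (by positivity)
  have hcont : Continuous (fun x => fderiv ℝ (fpot g) (φ x)) :=
    ((fpot_contDiff h1).continuous_fderiv one_ne_zero).comp hφ.continuous
  obtain ⟨M₀, hM₀⟩ := (isCompact_closedBall (0 : Rn N) R).exists_bound_of_continuousOn hcont.continuousOn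
  set M : ℝ := max M₀ 1
  have hM1 : 1 ≤ M := le_max_right _ _
  have hM : ∀ x ∈ Metric.closedBall (0 : Rn N) R, ‖fderiv ℝ (fpot g) (φ x)‖ ≤ M :=
    fun x hx => (hM₀ x hx).trans (le_max_left _ _)
  set δ : ℝ := 1 / (4 * M) with hδ
  have hδ0 : 0 < δ := by positivity
  have hδ2 : 2 * M * (2 * δ ^ 2) ≤ 1 / 2 := by
    rw [hδ]; field_simp; nlinarith
  refine ⟨R, δ, 4 * M, hδ0, by positivity, fun a ha => ?_⟩
  have hac := ha.continuous
  have hdc := ha.continuous_fderiv one_ne_zero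
  have hloc : ∫⁻ x in Metric.closedBall 0 R, ‖fderiv ℝ (fpot g) (φ x)‖ₑ * ‖a x‖ₑ ^ 2 ≤
      ENNReal.ofReal M * (2 * Tavg R δ a + 2 * ENNReal.ofReal δ ^ 2 * ∫⁻ x, ‖fderiv ℝ a x‖ₑ ^ 2) := by
    calc _ ≤ ∫⁻ x in Metric.closedBall 0 R, ENNReal.ofReal M * ‖a x‖ₑ ^ 2 := by
          apply setLIntegral_mono (by fun_prop)
          intro x hx
          gcongr
          rw [← ofReal_norm]
          exact ENNReal.ofReal_le_ofReal (hM x hx)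
      _ = ENNReal.ofReal M * ∫⁻ x in Metric.closedBall 0 R, ‖a x‖ₑ ^ 2 := lintegral_const_mul _ (by fun_prop)
      _ ≤ _ := by gcongr; exact avg_est a ha hδ0 _
  have hsplit := lintegral_add_compl (μ := (volume : Measure (Rn N)))
    (fun x => ‖fderiv ℝ (fpot g) (φ x)‖ₑ * ‖a x‖ₑ ^ 2)
    (Metric.isClosed_closedBall (x := (0 : Rn N)) (ε := R)).measurableSet
  have hEa : EH1 a = (∫⁻ x, ‖a x‖ₑ ^ 2) + ∫⁻ x, ‖fderiv ℝ a x‖ₑ ^ 2 := by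
    unfold EH1; rw [lintegral_add_left (by fun_prop)]
  have htl := hR a ha
  rw [hEa] at htl
  rw [← hsplit]
  set A := ∫⁻ x, ‖a x‖ₑ ^ 2
  set B := ∫⁻ x, ‖fderiv ℝ a x‖ₑ ^ 2
  set T := Tavg R δ a
  have c1 : 2 * ENNReal.ofReal (min (1/4) (ω / 4)) ≤ ENNReal.ofReal (ω / 2) := by
    rw [← ENNReal.ofReal_ofNat, ← ENNReal.ofReal_mul (by norm_num)]
    apply ENNReal.ofReal_le_ofReal
    have := min_le_right (1/4) (ω / 4)
    linarith
  have c2 : 2 * ENNReal.ofReal (min (1/4) (ω / 4)) + 2 * ENNReal.ofReal M * (2 * ENNReal.ofReal δ ^ 2) ≤ 1 := by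
    rw [← ENNReal.ofReal_pow hδ0.le]
    rw [← ENNReal.ofReal_ofNat, ← ENNReal.ofReal_mul (by norm_num), ← ENNReal.ofReal_mul (by norm_num),
      ← ENNReal.ofReal_mul (by norm_num), ← ENNReal.ofReal_mul (by positivity), ← ENNReal.ofReal_add (by positivity) (by positivity),
      ENNReal.ofReal_le_one]
    have := min_le_left (1/4) (ω / 4)
    linarith
  have c3 : 2 * ENNReal.ofReal M * 2 = ENNReal.ofReal (4 * M) := by
    rw [ENNReal.ofReal_mul (by norm_num)]
    rw [show ENNReal.ofReal 4 = 4 by simp]; ring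
  calc _ ≤ 2 * (ENNReal.ofReal M * (2 * T + 2 * ENNReal.ofReal δ ^ 2 * B) + ENNReal.ofReal (min (1/4) (ω / 4)) * (A + B)) := by
        gcongr
    _ = (2 * ENNReal.ofReal (min (1/4) (ω / 4))) * A + (2 * ENNReal.ofReal (min (1/4) (ω / 4)) + 2 * ENNReal.ofReal M * (2 * ENNReal.ofReal δ ^ 2)) * B +
        (2 * ENNReal.ofReal M * 2) * T := by ring
    _ ≤ ENNReal.ofReal (ω / 2) * A + 1 * B + ENNReal.ofReal (4 * M) * T := by
        rw [c3]; gcongr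
    _ = _ := by rw [one_mul]

lemma avg_eq {N : ℕ} {a : Rn N → ℂ} (δ : ℝ) (ha : MemLp a 2 (volume : Measure (Rn N))) (x : Rn N) :
    ∫ y, a (x + y) ∂(nuB N δ) = ((volume (Metric.ball (0 : Rn N) δ))⁻¹).toReal •
      inner ℂ (indicatorConstLp 2 (Metric.isOpen_ball (x := x) (ε := δ)).measurableSet measure_ball_lt_top.ne (1 : ℂ)) ha.toLp := by
  rw [L2.inner_indicatorConstLp_one, nuB, integral_smul_measure]
  congr 1
  rw [setIntegral_congr_ae (g := a) Metric.isOpen_ball.measurableSet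
    (ha.coeFn_toLp.mono fun y hy _ => hy)]
  rw [← integral_indicator Metric.isOpen_ball.measurableSet, ← integral_indicator Metric.isOpen_ball.measurableSet]
  conv_rhs => rw [← integral_add_left_eq_self _ x]
  congr 1
  ext y
  simp [Set.indicator]

lemma Tavg_tendsto {N : ℕ} (R : ℝ) {δ : ℝ} (hδ : 0 < δ) (a : ℕ → Rn N → ℂ) (hc : ∀ n, Continuous (a n))
    (hm : ∀ n, MemLp (a n) 2 (volume : Measure (Rn N))) (C : ℝ) (hb : ∀ n, ‖(hm n).toLp‖ ≤ C)
    (hw : ∀ w : Lp ℂ 2 (volume : Measure (Rn N)), Filter.Tendsto (fun n => inner ℂ w (hm n).toLp) Filter.atTop (nhds 0)) :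
    Filter.Tendsto (fun n => Tavg R δ (a n)) Filter.atTop (nhds 0) := by
  have := nuB_prob (N := N) hδ
  set v := ((volume (Metric.ball (0 : Rn N) δ))⁻¹).toReal
  set B : ℝ := v * ((volume (Metric.ball (0 : Rn N) δ)).toReal ^ (1 / 2 : ℝ) * C)
  have hbound : ∀ n x, ‖∫ y, a n (x + y) ∂(nuB N δ)‖ₑ ≤ ENNReal.ofReal B := by
    intro n x
    rw [avg_eq δ (hm n) x, ← ofReal_norm]
    apply ENNReal.ofReal_le_ofReal
    rw [norm_smul, Real.norm_of_nonneg ENNReal.toReal_nonneg]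
    apply mul_le_mul_of_nonneg_left _ ENNReal.toReal_nonneg
    refine (norm_inner_le_norm _ _).trans ?_
    rw [norm_indicatorConstLp (by norm_num) (by norm_num)]
    have : (volume : Measure (Rn N)).real (Metric.ball x δ) = (volume (Metric.ball (0 : Rn N) δ)).toReal := by
      rw [Measure.real, Measure.addHaar_ball_center]
    rw [this]
    simp only [norm_one, one_mul, ENNReal.toReal_ofNat]
    gcongr
    exact hb n
  unfold Tavg
  have h := tendsto_lintegral_of_dominated_convergence (μ := (volume.restrict (Metric.closedBall (0 : Rn N) R)))
    (F := fun n x => ‖∫ y, a n (x + y) ∂(nuB N δ)‖ₑ ^ 2) (f := fun _ => 0) (fun _ => ENNReal.ofReal B ^ 2)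
    (fun n => by
      have : StronglyMeasurable (fun x => ∫ y, a n (x + y) ∂(nuB N δ)) := by
        apply StronglyMeasurable.integral_prod_right (f := fun x y => a n (x + y))
        apply Continuous.stronglyMeasurable
        unfold Function.uncurry
        have := hc n
        fun_prop
      exact this.measurable.enorm.pow_const 2)
    (fun n => Filter.Eventually.of_forall fun x => pow_le_pow_left' (hbound n x) 2)
    (by
      rw [lintegral_const, Measure.restrict_apply_univ]
      exact ENNReal.mul_ne_top (by simp) measure_closedBall_lt_top.ne)
    (Filter.Eventually.of_forall fun x => by
      have h1 : Filter.Tendsto (fun n => ∫ y, a n (x + y) ∂(nuB N δ)) Filter.atTop (nhds 0) := by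
        simp only [avg_eq δ (hm _) x]
        have h := (hw (indicatorConstLp 2 (Metric.isOpen_ball (x := x) (ε := δ)).measurableSet measure_ball_lt_top.ne (1:ℂ))).const_smul v
        rw [smul_zero] at h
        exact h
      have h2 := (continuous_enorm.tendsto _).comp h1
      have h3 := ((ENNReal.continuous_pow 2).tendsto _).comp h2
      simpa [Function.comp_def] using h3)
  simpa using h

lemma Tavg_lt_top {N : ℕ} (R : ℝ) {δ : ℝ} (hδ : 0 < δ) (a : Rn N → ℂ)
    (hm : MemLp a 2 (volume : Measure (Rn N))) : Tavg R δ a ≠ ∞ := by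
  unfold Tavg
  set v := ((volume (Metric.ball (0 : Rn N) δ))⁻¹).toReal
  set B : ℝ := v * ((volume (Metric.ball (0 : Rn N) δ)).toReal ^ (1 / 2 : ℝ) * ‖hm.toLp‖)
  have hbound : ∀ x, ‖∫ y, a (x + y) ∂(nuB N δ)‖ₑ ≤ ENNReal.ofReal B := by
    intro x
    rw [avg_eq δ hm x, ← ofReal_norm]
    apply ENNReal.ofReal_le_ofReal
    rw [norm_smul, Real.norm_of_nonneg ENNReal.toReal_nonneg]
    apply mul_le_mul_of_nonneg_left _ ENNReal.toReal_nonneg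
    refine (norm_inner_le_norm _ _).trans ?_
    rw [norm_indicatorConstLp (by norm_num) (by norm_num)]
    have : (volume : Measure (Rn N)).real (Metric.ball x δ) = (volume (Metric.ball (0 : Rn N) δ)).toReal := by
      rw [Measure.real, Measure.addHaar_ball_center]
    rw [this]
    simp only [norm_one, one_mul, ENNReal.toReal_ofNat]
    rfl
  refine ne_top_of_le_ne_top ?_ (lintegral_mono fun x => pow_le_pow_left' (hbound x) 2)
  rw [lintegral_const, Measure.restrict_apply_univ]
  exact ENNReal.mul_ne_top (by simp) measure_closedBall_lt_top.ne
end Aux3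

section Aux4

noncomputable def pd {N : ℕ} (i : Fin N) (a : Rn N → ℂ) (x : Rn N) : ℂ :=
  fderiv ℝ a x (EuclideanSpace.single i 1)

structure S2 {N : ℕ} (a : Rn N → ℂ) : Prop where
  cd : ContDiff ℝ 2 a
  m0 : MemLp a 2 (volume : Measure (Rn N))
  m1 : ∀ i, MemLp (pd i a) 2 (volume : Measure (Rn N))
  m2 : ∀ i, MemLp (pd i (pd i a)) 2 (volume : Measure (Rn N))

lemma pd_contDiff {N : ℕ} (i : Fin N) {a : Rn N → ℂ} {n : ℕ} (ha : ContDiff ℝ (n+1) a) :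
    ContDiff ℝ n (pd i a) := by
  have h := ha.fderiv_right (m := n) le_rfl
  exact h.clm_apply contDiff_const

lemma pd_cd1 {N : ℕ} (i : Fin N) {a : Rn N → ℂ} (ha : ContDiff ℝ 2 a) :
    ContDiff ℝ 1 (pd i a) := pd_contDiff (n := 1) i (by simpa [one_add_one_eq_two] using ha)

lemma pd_cont {N : ℕ} (i : Fin N) {a : Rn N → ℂ} (ha : ContDiff ℝ 1 a) :
    Continuous (pd i a) := (pd_contDiff (n := 0) i (by simpa using ha)).continuous

lemma pd_add {N : ℕ} (i : Fin N) {a b : Rn N → ℂ} (ha : ContDiff ℝ 1 a) (hb : ContDiff ℝ 1 b) :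
    pd i (a + b) = pd i a + pd i b := by
  ext x
  simp [pd, fderiv_add (ha.differentiable (by simp) x) (hb.differentiable (by simp) x)]

lemma pd_smul {N : ℕ} (i : Fin N) {a : Rn N → ℂ} (c : ℂ) (ha : ContDiff ℝ 1 a) :
    pd i (c • a) = c • pd i a := by
  ext x
  simp [pd, fderiv_const_smul (ha.differentiable (by simp) x)]

lemma iter2 {N : ℕ} {a : Rn N → ℂ} (ha : ContDiff ℝ 2 a) (i : Fin N) (x : Rn N) :
    iteratedFDeriv ℝ 2 a x ![EuclideanSpace.single i 1, EuclideanSpace.single i 1] = pd i (pd i a) x := by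
  rw [iteratedFDeriv_two_apply]
  have hd : DifferentiableAt ℝ (fderiv ℝ a) x :=
    (ha.fderiv_right (m := 1) (by norm_num [one_add_one_eq_two])).differentiable (by simp) x
  simp only [pd, Matrix.cons_val_zero, Matrix.cons_val_one]
  unfold pd
  rw [fderiv_clm_apply hd (differentiableAt_const _)]
  simp

lemma lap_eq {N : ℕ} {a : Rn N → ℂ} (ha : ContDiff ℝ 2 a) (x : Rn N) :
    lap a x = ∑ i, pd i (pd i a) x := by
  unfold lap
  exact Finset.sum_congr rfl fun i _ => iter2 ha i x

lemma S2.add {N : ℕ} {a b : Rn N → ℂ} (ha : S2 a) (hb : S2 b) : S2 (a + b) where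
  cd := ha.cd.add hb.cd
  m0 := ha.m0.add hb.m0
  m1 i := by
    rw [pd_add i (ha.cd.of_le (by norm_num)) (hb.cd.of_le (by norm_num))]
    exact (ha.m1 i).add (hb.m1 i)
  m2 i := by
    rw [pd_add i (ha.cd.of_le (by norm_num)) (hb.cd.of_le (by norm_num)), pd_add i (pd_cd1 i ha.cd) (pd_cd1 i hb.cd)]
    exact (ha.m2 i).add (hb.m2 i)

lemma S2.smul {N : ℕ} {a : Rn N → ℂ} (c : ℂ) (ha : S2 a) : S2 (c • a) where
  cd := contDiff_const.smul ha.cd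
  m0 := ha.m0.const_smul c
  m1 i := by
    rw [pd_smul i c (ha.cd.of_le (by norm_num))]
    exact (ha.m1 i).const_smul c
  m2 i := by
    rw [pd_smul i c (ha.cd.of_le (by norm_num)), pd_smul i c (pd_cd1 i ha.cd)]
    exact (ha.m2 i).const_smul c

lemma lap_add' {N : ℕ} {a b : Rn N → ℂ} (ha : S2 a) (hb : S2 b) (x : Rn N) : lap (a + b) x = lap a x + lap b x := by
  rw [lap_eq ha.cd, lap_eq hb.cd, lap_eq (ha.add hb).cd, ← Finset.sum_add_distrib]
  refine Finset.sum_congr rfl fun i _ => ?_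
  rw [pd_add i (ha.cd.of_le (by norm_num)) (hb.cd.of_le (by norm_num)), pd_add i (pd_cd1 i ha.cd) (pd_cd1 i hb.cd)]
  rfl

lemma lap_smul' {N : ℕ} {a : Rn N → ℂ} (c : ℂ) (ha : S2 a) (x : Rn N) : lap (c • a) x = c * lap a x := by
  rw [lap_eq ha.cd, lap_eq (ha.smul c).cd, Finset.mul_sum]
  refine Finset.sum_congr rfl fun i _ => ?_
  rw [pd_smul i c (ha.cd.of_le (by norm_num)), pd_smul i c (pd_cd1 i ha.cd)]
  rfl

lemma S2.zero {N : ℕ} : S2 (0 : Rn N → ℂ) := by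
  have h : ∀ i : Fin N, pd i (0 : Rn N → ℂ) = 0 := by
    intro i; ext x; simp [pd]
  refine ⟨contDiff_const, MemLp.zero, fun i => ?_, fun i => ?_⟩
  · rw [h]; exact MemLp.zero
  · rw [h, h]; exact MemLp.zero

lemma S2.memLap {N : ℕ} {a : Rn N → ℂ} (ha : S2 a) : MemLp (lap a) 2 (volume : Measure (Rn N)) := by
  have : lap a = ∑ i, pd i (pd i a) := by ext x; rw [lap_eq ha.cd]; simp
  rw [this]
  exact memLp_finsetSum' _ fun i _ => ha.m2 i

lemma S2.of_mem {N : ℕ} {u : Rn N → ℂ × ℂ} (hu : MemSobolev 2 u) (L : ℂ × ℂ →L[ℝ] ℂ) : S2 (fun x => L (u x)) := by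
  have hc : ContDiff ℝ 2 u := by simpa using hu.1
  have hLc : ContDiff ℝ 2 (fun x => L (u x)) := L.contDiff.comp hc
  have hb : ∀ n : ℕ, n ≤ 2 → ∀ x, ‖iteratedFDeriv ℝ n (fun x => L (u x)) x‖ ≤ ‖L‖ * ‖iteratedFDeriv ℝ n u x‖ :=
    fun n hn x => L.norm_iteratedFDeriv_comp_left (N := 2) hc.contDiffAt (by exact_mod_cast hn)
  refine ⟨hLc, ?_, fun i => ?_, fun i => ?_⟩
  · refine MemLp.of_le_mul (c := ‖L‖) (hu.2 0 (by norm_num)) hLc.continuous.aestronglyMeasurable ?_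
    refine Filter.Eventually.of_forall fun x => ?_
    simpa using hb 0 (by norm_num) x
  · refine MemLp.of_le_mul (c := ‖L‖) (hu.2 1 (by norm_num)) (pd_cont i (hLc.of_le (by norm_num))).aestronglyMeasurable ?_
    refine Filter.Eventually.of_forall fun x => ?_
    refine le_trans ?_ (hb 1 (by norm_num) x)
    rw [norm_iteratedFDeriv_one]
    refine (ContinuousLinearMap.le_opNorm _ _).trans ?_
    simp
  · refine MemLp.of_le_mul (c := ‖L‖) (hu.2 2 (by norm_num)) (pd_cont i (pd_cd1 i hLc)).aestronglyMeasurable ?_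
    refine Filter.Eventually.of_forall fun x => ?_
    refine le_trans ?_ (hb 2 (by norm_num) x)
    rw [← iter2 hLc]
    refine (ContinuousMultilinearMap.le_opNorm _ _).trans ?_
    simp [Fin.prod_univ_two]

lemma EH1_ne_top {N : ℕ} {φ : Rn N → ℂ} (hφ : MemSobolev 1 φ) : EH1 φ ≠ ∞ := by
  have hc : ContDiff ℝ 1 φ := by simpa using hφ.1
  have h0 : MemLp φ 2 (volume : Measure (Rn N)) := by
    refine MemLp.of_le (hφ.2 0 (by norm_num)) hc.continuous.aestronglyMeasurable ?_
    exact Filter.Eventually.of_forall fun x => by simp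
  have h1 : MemLp (fderiv ℝ φ) 2 (volume : Measure (Rn N)) := by
    refine MemLp.of_le (hφ.2 1 (by norm_num)) (hc.continuous_fderiv (by simp)).aestronglyMeasurable ?_
    exact Filter.Eventually.of_forall fun x => by simp [norm_iteratedFDeriv_one]
  have key : ∀ {F : Type} [NormedAddCommGroup F] (f : Rn N → F), MemLp f 2 (volume : Measure (Rn N)) → ∫⁻ x, ‖f x‖ₑ ^ 2 ≠ ∞ := by
    intro F _ f hf
    have := lintegral_rpow_enorm_lt_top_of_eLpNorm_lt_top (by norm_num) (by norm_num) hf.2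
    simpa using this.ne
  unfold EH1
  rw [lintegral_add_left (by have := hc.continuous; fun_prop)]
  exact ENNReal.add_ne_top.2 ⟨key _ h0, key _ h1⟩

lemma fderiv_norm_sq_le {N : ℕ} (a : Rn N → ℂ) (x : Rn N) : ‖fderiv ℝ a x‖ ^ 2 ≤ ∑ i, ‖pd i a x‖ ^ 2 := by
  have : ‖fderiv ℝ a x‖ ≤ Real.sqrt (∑ i, ‖pd i a x‖ ^ 2) := by
    refine ContinuousLinearMap.opNorm_le_bound _ (Real.sqrt_nonneg _) fun v => ?_
    have hv : v = ∑ i, v i • (EuclideanSpace.single i (1:ℝ) : Rn N) := by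
      ext j
      simp [Finset.sum_apply, Pi.single_apply]
    conv_lhs => rw [hv, map_sum]
    refine (norm_sum_le _ _).trans ?_
    rw [EuclideanSpace.norm_eq, mul_comm]
    refine le_trans (le_of_eq ?_) (Real.sum_mul_le_sqrt_mul_sqrt _ _ _)
    refine Finset.sum_congr rfl fun i _ => ?_
    rw [map_smul, norm_smul]; rfl
  calc _ ≤ (Real.sqrt (∑ i, ‖pd i a x‖ ^ 2)) ^ 2 := by gcongr
    _ = _ := Real.sq_sqrt (by positivity)

lemma int_conj_mul {N : ℕ} {a b : Rn N → ℂ} (ha : MemLp a 2 (volume : Measure (Rn N)))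
    (hb : MemLp b 2 (volume : Measure (Rn N))) : Integrable (fun x => (starRingEnd ℂ) (a x) * b x) := by
  have h : MemLp (fun x => (starRingEnd ℂ) (a x)) 2 (volume : Measure (Rn N)) := ha.star
  exact h.integrable_mul hb

lemma pd_conj {N : ℕ} (i : Fin N) {a : Rn N → ℂ} (ha : ContDiff ℝ 1 a) (x : Rn N) :
    fderiv ℝ (fun x => (starRingEnd ℂ) (a x)) x (EuclideanSpace.single i 1) = (starRingEnd ℂ) (pd i a x) := by
  have h := (Complex.conjCLE.toContinuousLinearMap.hasFDerivAt (x := a x)).comp x (ha.differentiable (by simp) x).hasFDerivAt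
  have h2 : HasFDerivAt (fun x => (starRingEnd ℂ) (a x)) _ x := h
  rw [h2.fderiv]
  rfl

lemma ibp {N : ℕ} {a b : Rn N → ℂ} (ha : S2 a) (hb : S2 b) :
    ∫ x, (starRingEnd ℂ) (a x) * lap b x = - ∑ i, ∫ x, (starRingEnd ℂ) (pd i a x) * pd i b x := by
  have hcj : Differentiable ℝ (fun x => (starRingEnd ℂ) (a x)) :=
    Complex.conjCLE.differentiable.comp (ha.cd.differentiable (by simp))
  have h : ∀ i, ∫ x, (starRingEnd ℂ) (a x) * pd i (pd i b) x = - ∫ x, (starRingEnd ℂ) (pd i a x) * pd i b x := by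
    intro i
    have := integral_mul_fderiv_eq_neg_fderiv_mul_of_integrable (μ := (volume : Measure (Rn N)))
      (f := fun x => (starRingEnd ℂ) (a x)) (g := pd i b) (v := EuclideanSpace.single i 1)
      (by simp only [pd_conj i (ha.cd.of_le (by norm_num))]; exact int_conj_mul (ha.m1 i) (hb.m1 i))
      (int_conj_mul ha.m0 (hb.m2 i)) (int_conj_mul ha.m0 (hb.m1 i)) (fun x _ => hcj x)
      (fun x _ => (pd_cd1 i hb.cd).differentiable (by simp) x)
    simp only [pd_conj i (ha.cd.of_le (by norm_num))] at this
    exact this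
  simp only [lap_eq hb.cd, Finset.mul_sum]
  rw [integral_finsetSum _ (fun i _ => int_conj_mul ha.m0 (hb.m2 i)), ← Finset.sum_neg_distrib]
  exact Finset.sum_congr rfl fun i _ => h i

lemma lap_symm {N : ℕ} {a b : Rn N → ℂ} (ha : S2 a) (hb : S2 b) :
    ∫ x, (starRingEnd ℂ) (a x) * lap b x = ∫ x, (starRingEnd ℂ) (lap a x) * b x := by
  have h2 : ∫ x, (starRingEnd ℂ) (lap a x) * b x = (starRingEnd ℂ) (∫ x, (starRingEnd ℂ) (b x) * lap a x) := by
    rw [← integral_conj]; congr 1; ext x; simp [mul_comm]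
  rw [h2, ibp ha hb, ibp hb ha, map_neg, map_sum]
  congr 1
  refine Finset.sum_congr rfl fun i _ => ?_
  rw [← integral_conj]; congr 1; ext x; simp [mul_comm]

lemma lap_re {N : ℕ} {a : Rn N → ℂ} (ha : S2 a) :
    Integrable (fun x => ‖fderiv ℝ a x‖ ^ 2) ∧
    ∫ x, ‖fderiv ℝ a x‖ ^ 2 ≤ (- ∫ x, (starRingEnd ℂ) (a x) * lap a x).re := by
  have hI : Integrable (fun x => ∑ i, ‖pd i a x‖ ^ 2) :=
    integrable_finsetSum _ fun i _ => (ha.m1 i).integrable_norm_pow (by norm_num)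
  have hI2 : Integrable (fun x => ‖fderiv ℝ a x‖ ^ 2) := by
    refine hI.mono ?_ ?_
    · have := ha.cd.continuous_fderiv (by norm_num)
      exact (by fun_prop : Continuous (fun x => ‖fderiv ℝ a x‖ ^ 2)).aestronglyMeasurable
    · refine Filter.Eventually.of_forall fun x => ?_
      rw [Real.norm_of_nonneg (by positivity), Real.norm_of_nonneg (by positivity)]
      exact fderiv_norm_sq_le a x
  refine ⟨hI2, (integral_mono hI2 hI (fderiv_norm_sq_le a)).trans (le_of_eq ?_)⟩
  rw [ibp ha ha, neg_neg, integral_finsetSum _ (fun i _ => (ha.m1 i).integrable_norm_pow (by norm_num)), Complex.re_sum]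
  refine Finset.sum_congr rfl fun i _ => ?_
  have : ∀ x, (starRingEnd ℂ) (pd i a x) * pd i a x = ((‖pd i a x‖ ^ 2 : ℝ) : ℂ) := by
    intro x; rw [Complex.conj_mul']; push_cast; rfl
  simp only [this]
  rw [integral_complex_ofReal, Complex.ofReal_re]

end Aux4

section Aux5

def KeyProp {D E : Type} [AddCommGroup D] [Module ℂ D] [NormedAddCommGroup E] [InnerProductSpace ℂ E]
    (Φ Ψ : D →ₗ[ℂ] E) : Prop :=
  ∀ (u : ℕ → D) (c C : ℝ), 0 < c → (∀ n, c ≤ ‖Φ (u n)‖) → (∀ n, ‖Φ (u n)‖ ≤ C) →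
    (∀ w : E, Filter.Tendsto (fun n => inner ℂ w (Φ (u n))) Filter.atTop (nhds 0)) →
    ¬ Filter.Tendsto (fun n => (inner ℂ (Φ (u n)) (Ψ (u n))).re) Filter.atTop (nhds 0)

lemma abs_ess {D E : Type} [AddCommGroup D] [Module ℂ D] [NormedAddCommGroup E] [InnerProductSpace ℂ E]
    (Φ Ψ : D →ₗ[ℂ] E) (J : E →ₗ[ℂ] E) (hJ : ∀ x y, inner ℂ (J x) y = - inner ℂ x (J y))
    (hJJ : ∀ x, J (J x) = -x) (hs : ∀ u w, inner ℂ (Φ u) (Ψ w) = inner ℂ (Ψ u) (Φ w))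
    (hK : KeyProp Φ Ψ) (z : ℂ) (u : ℕ → D) (c C : ℝ) (hc : 0 < c) (h1 : ∀ n, c ≤ ‖Φ (u n)‖)
    (h2 : ∀ n, ‖Φ (u n)‖ ≤ C)
    (hw : ∀ w : E, Filter.Tendsto (fun n => inner ℂ w (Φ (u n))) Filter.atTop (nhds 0))
    (he : Filter.Tendsto (fun n => ‖J (Ψ (u n)) - z • Φ (u n)‖) Filter.atTop (nhds 0)) : z.re = 0 := by
  by_contra hz
  apply hK u c C hc h1 h2 hw
  set s : ℕ → ℂ := fun n => inner ℂ (Φ (u n)) (J (Φ (u n))) with hsdef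
  set r : ℕ → ℂ := fun n => inner ℂ (J (Φ (u n))) (J (Ψ (u n)) - z • Φ (u n)) with hrdef
  have hsre : ∀ n, (s n).re = 0 := by
    intro n
    have h : (starRingEnd ℂ) (s n) = - s n := by
      simp only [hsdef]
      rw [inner_conj_symm, hJ]
    have := congrArg Complex.re h
    simp at this
    linarith
  have hq : ∀ n, inner ℂ (Φ (u n)) (Ψ (u n)) = - z * s n + r n := by
    intro n
    simp only [hsdef, hrdef, inner_sub_right, inner_smul_right]
    have e1 : inner ℂ (J (Φ (u n))) (J (Ψ (u n))) = inner ℂ (Φ (u n)) (Ψ (u n)) := by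
      rw [hJ, hJJ, inner_neg_right, neg_neg]
    have e2 := hJ (Φ (u n)) (Φ (u n))
    rw [e1, e2]; ring
  have hqim : ∀ n, (inner ℂ (Φ (u n)) (Ψ (u n)) : ℂ).im = 0 := by
    intro n
    have h := inner_conj_symm (𝕜 := ℂ) (Ψ (u n)) (Φ (u n))
    rw [← hs] at h
    exact Complex.conj_eq_iff_im.1 h
  have hJn : ∀ x, ‖J x‖ = ‖x‖ := by
    intro x
    have : (inner ℂ (J x) (J x) : ℂ) = inner ℂ x x := by rw [hJ, hJJ, inner_neg_right, neg_neg]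
    rw [@norm_eq_sqrt_re_inner ℂ, @norm_eq_sqrt_re_inner ℂ _ _ _ _ x, this]
  have hr : Filter.Tendsto r Filter.atTop (nhds 0) := by
    have : Filter.Tendsto (fun n => C * ‖J (Ψ (u n)) - z • Φ (u n)‖) Filter.atTop (nhds 0) := by
      simpa using he.const_mul C
    refine squeeze_zero_norm (fun n => ?_) this
    refine (norm_inner_le_norm _ _).trans ?_
    rw [hJn]
    exact mul_le_mul_of_nonneg_right (h2 n) (norm_nonneg _)
  have hrre : Filter.Tendsto (fun n => (r n).re) Filter.atTop (nhds 0) :=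
    (Complex.continuous_re.tendsto _).comp hr
  have hrim : Filter.Tendsto (fun n => (r n).im) Filter.atTop (nhds 0) :=
    (Complex.continuous_im.tendsto _).comp hr
  have hre : ∀ n, (inner ℂ (Φ (u n)) (Ψ (u n)) : ℂ).re = z.im * (z.re)⁻¹ * (r n).im + (r n).re := by
    intro n
    have a1 := hqim n
    rw [hq n] at a1 ⊢
    simp [hsre n] at a1 ⊢
    field_simp
    linear_combination -z.im * a1
  simp only [hre]
  simpa using (hrim.const_mul (z.im * (z.re)⁻¹)).add hrre

lemma abs_fin {D E : Type} [AddCommGroup D] [Module ℂ D] [NormedAddCommGroup E] [InnerProductSpace ℂ E]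
    (Φ Ψ : D →ₗ[ℂ] E) (J : E →ₗ[ℂ] E) (hJ : ∀ x y, inner ℂ (J x) y = - inner ℂ x (J y))
    (hJJ : ∀ x, J (J x) = -x) (hs : ∀ u w, inner ℂ (Φ u) (Ψ w) = inner ℂ (Ψ u) (Φ w))
    (hK : KeyProp Φ Ψ) (z : ℕ → ℂ) (hz : ∀ n, 0 < (z n).re) (χ : ℕ → D)
    (hli : LinearIndependent ℂ (fun n => Φ (χ n))) (he : ∀ n, J (Ψ (χ n)) = z n • Φ (χ n)) : False := by
  have h0 : ∀ j k, inner ℂ (Φ (χ j)) (Ψ (χ k)) = 0 := by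
    intro j k
    have e : ∀ k, Ψ (χ k) = -(z k) • J (Φ (χ k)) := by
      intro k
      have := congrArg J (he k)
      rw [hJJ, map_smul] at this
      rw [neg_smul, ← this, neg_neg]
    have h := hs (χ j) (χ k)
    rw [e, e, inner_smul_right, inner_smul_left, hJ] at h
    have hs0 : (z k + (starRingEnd ℂ) (z j)) * inner ℂ (Φ (χ j)) (J (Φ (χ k))) = 0 := by
      simp only [map_neg] at h
      linear_combination -h
    rw [e, inner_smul_right]
    rcases mul_eq_zero.1 hs0 with h | h
    · exfalso
      have := congrArg Complex.re h
      simp at this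
      linarith [hz j, hz k]
    · rw [h, mul_zero]
  have hspan : ∀ u ∈ Submodule.span ℂ (Set.range χ), ∀ w ∈ Submodule.span ℂ (Set.range χ),
      inner ℂ (Φ u) (Ψ w) = 0 := by
    intro u hu w hw
    induction hu using Submodule.span_induction with
    | mem x hx =>
      obtain ⟨j, rfl⟩ := hx
      induction hw using Submodule.span_induction with
      | mem y hy => obtain ⟨k, rfl⟩ := hy; exact h0 j k
      | zero => simp
      | add a b _ _ ha hb => rw [map_add, inner_add_right, ha, hb, add_zero]
      | smul c a _ ha => rw [map_smul, inner_smul_right, ha, mul_zero]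
    | zero => simp
    | add a b _ _ ha hb => rw [map_add, inner_add_left, ha, hb, add_zero]
    | smul c a _ ha => rw [map_smul, inner_smul_left, ha, mul_zero]
  have ho := InnerProductSpace.gramSchmidtNormed_orthonormal hli
  set e := InnerProductSpace.gramSchmidtNormed ℂ (fun n => Φ (χ n))
  have hmem : ∀ n, ∃ u ∈ Submodule.span ℂ (Set.range χ), Φ u = e n := by
    intro n
    have h : e n ∈ Submodule.span ℂ (Set.range e) := Submodule.subset_span ⟨n, rfl⟩
    rw [InnerProductSpace.span_gramSchmidtNormed_range, InnerProductSpace.span_gramSchmidt] at h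
    have h2 : Set.range (fun n => Φ (χ n)) = Φ '' Set.range χ := by
      rw [← Set.range_comp]; rfl
    rw [h2, ← Submodule.map_span] at h
    exact h
  choose u hu hue using hmem
  refine hK u 1 1 one_pos (fun n => by rw [hue, ho.1 n]) (fun n => by rw [hue, ho.1 n]) (fun w => ?_) ?_
  · have h1 := (ho.inner_products_summable w).tendsto_atTop_zero
    rw [tendsto_zero_iff_norm_tendsto_zero]
    have h2 := (Real.continuous_sqrt.tendsto _).comp h1
    simp only [Function.comp_def, Real.sqrt_zero, Real.sqrt_sq (norm_nonneg _)] at h2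
    refine h2.congr fun n => ?_
    rw [hue, norm_inner_symm]
  · simp only [fun n => hspan (u n) (hu n) (u n) (hu n)]
    simp

end Aux5

section Aux6

noncomputable def PotU {N : ℕ} (g : ℝ → ℝ) (φ : Rn N → ℂ) (u : Rn N → ℂ × ℂ) (x : Rn N) : ℂ × ℂ :=
  cext (fderiv ℝ (fpot g) (φ x)) (u x)

lemma PotU_add1 {N : ℕ} (g : ℝ → ℝ) (φ : Rn N → ℂ) (u v : Rn N → ℂ × ℂ) :
    (fun x => (PotU g φ (u + v) x).1) = (fun x => (PotU g φ u x).1) + (fun x => (PotU g φ v x).1) := by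
  ext x; simp [PotU, cext]; ring

lemma PotU_add2 {N : ℕ} (g : ℝ → ℝ) (φ : Rn N → ℂ) (u v : Rn N → ℂ × ℂ) :
    (fun x => (PotU g φ (u + v) x).2) = (fun x => (PotU g φ u x).2) + (fun x => (PotU g φ v x).2) := by
  ext x; simp [PotU, cext]; ring

lemma PotU_smul1 {N : ℕ} (g : ℝ → ℝ) (φ : Rn N → ℂ) (c : ℂ) (u : Rn N → ℂ × ℂ) :
    (fun x => (PotU g φ (c • u) x).1) = c • (fun x => (PotU g φ u x).1) := by
  ext x; simp [PotU, cext]; ring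

lemma PotU_smul2 {N : ℕ} (g : ℝ → ℝ) (φ : Rn N → ℂ) (c : ℂ) (u : Rn N → ℂ × ℂ) :
    (fun x => (PotU g φ (c • u) x).2) = c • (fun x => (PotU g φ u x).2) := by
  ext x; simp [PotU, cext]; ring

noncomputable def Dsub {N : ℕ} (g : ℝ → ℝ) (φ : Rn N → ℂ) : Submodule ℂ (Rn N → ℂ × ℂ) where
  carrier := {u | S2 (fun x => (u x).1) ∧ S2 (fun x => (u x).2) ∧
    MemLp (fun x => (PotU g φ u x).1) 2 (volume : Measure (Rn N)) ∧
    MemLp (fun x => (PotU g φ u x).2) 2 (volume : Measure (Rn N))}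
  add_mem' := by
    rintro u v ⟨a1, a2, a3, a4⟩ ⟨b1, b2, b3, b4⟩
    refine ⟨a1.add b1, a2.add b2, ?_, ?_⟩
    · rw [PotU_add1]; exact a3.add b3
    · rw [PotU_add2]; exact a4.add b4
  zero_mem' := by
    refine ⟨S2.zero, S2.zero, ?_, ?_⟩
    all_goals simp [PotU, cext]
  smul_mem' := by
    rintro c u ⟨a1, a2, a3, a4⟩
    refine ⟨a1.smul c, a2.smul c, ?_, ?_⟩
    · rw [PotU_smul1]; exact a3.const_smul c
    · rw [PotU_smul2]; exact a4.const_smul c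

abbrev EE (N : ℕ) := WithLp 2 (Lp ℂ 2 (volume : Measure (Rn N)) × Lp ℂ 2 (volume : Measure (Rn N)))

lemma inner_toLp' {N : ℕ} {a b : Rn N → ℂ} (ha : MemLp a 2 (volume : Measure (Rn N)))
    (hb : MemLp b 2 (volume : Measure (Rn N))) :
    inner ℂ (ha.toLp) (hb.toLp) = ∫ x, (starRingEnd ℂ) (a x) * b x := by
  rw [L2.inner_def]
  refine integral_congr_ae ?_
  filter_upwards [ha.coeFn_toLp, hb.coeFn_toLp] with x h1 h2
  rw [h1, h2, RCLike.inner_apply, mul_comm]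

noncomputable def Hc {N : ℕ} (ω : ℝ) (a p : Rn N → ℂ) : Rn N → ℂ := -lap a + (ω : ℂ) • a + p

lemma Hc_mem {N : ℕ} (ω : ℝ) {a p : Rn N → ℂ} (ha : S2 a) (hp : MemLp p 2 (volume : Measure (Rn N))) :
    MemLp (Hc ω a p) 2 (volume : Measure (Rn N)) :=
  (ha.memLap.neg.add (ha.m0.const_smul _)).add hp

lemma Hc_add {N : ℕ} (ω : ℝ) {a b : Rn N → ℂ} (p q : Rn N → ℂ) (ha : S2 a) (hb : S2 b) :
    Hc ω (a + b) (p + q) = Hc ω a p + Hc ω b q := by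
  ext x
  have := lap_add' ha hb x
  simp [Hc, this]; ring

lemma Hc_smul {N : ℕ} (ω : ℝ) {a : Rn N → ℂ} (c : ℂ) (p : Rn N → ℂ) (ha : S2 a) :
    Hc ω (c • a) (c • p) = c • Hc ω a p := by
  ext x
  have := lap_smul' c ha x
  simp [Hc, this]; ring

lemma int_Hc_r {N : ℕ} (ω : ℝ) {a b p : Rn N → ℂ} (ha : S2 a) (hb : S2 b) (hp : MemLp p 2 (volume : Measure (Rn N))) :
    ∫ x, (starRingEnd ℂ) (a x) * Hc ω b p x = -(∫ x, (starRingEnd ℂ) (a x) * lap b x) +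
      ω * (∫ x, (starRingEnd ℂ) (a x) * b x) + ∫ x, (starRingEnd ℂ) (a x) * p x := by
  have e : ∀ x, (starRingEnd ℂ) (a x) * Hc ω b p x = -((starRingEnd ℂ) (a x) * lap b x) +
      ω * ((starRingEnd ℂ) (a x) * b x) + (starRingEnd ℂ) (a x) * p x := by
    intro x; simp [Hc]; ring
  simp only [e]
  have i1 := (int_conj_mul ha.m0 hb.memLap).neg
  have i2 := (int_conj_mul ha.m0 hb.m0).const_mul (ω : ℂ)
  have i3 := int_conj_mul ha.m0 hp
  have := integral_add (i1.add i2) i3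
  simp only [Pi.add_apply, Pi.neg_apply] at this
  rw [this]
  have := integral_add i1 i2
  simp only [Pi.neg_apply] at this
  rw [this, integral_neg, integral_const_mul]

lemma int_Hc_l {N : ℕ} (ω : ℝ) {a b p : Rn N → ℂ} (ha : S2 a) (hb : S2 b) (hp : MemLp p 2 (volume : Measure (Rn N))) :
    ∫ x, (starRingEnd ℂ) (Hc ω b p x) * a x = -(∫ x, (starRingEnd ℂ) (lap b x) * a x) +
      ω * (∫ x, (starRingEnd ℂ) (b x) * a x) + ∫ x, (starRingEnd ℂ) (p x) * a x := by
  have c : ∀ f h : Rn N → ℂ, ∫ x, (starRingEnd ℂ) (f x) * h x = (starRingEnd ℂ) (∫ x, (starRingEnd ℂ) (h x) * f x) := by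
    intro f h
    rw [← integral_conj]; congr 1; ext x; simp [mul_comm]
  rw [c, int_Hc_r ω ha hb hp, c (lap b), c b, c p]
  simp

noncomputable def PhiL {N : ℕ} (g : ℝ → ℝ) (φ : Rn N → ℂ) : Dsub g φ →ₗ[ℂ] EE N where
  toFun u := WithLp.toLp 2 (u.2.1.m0.toLp, u.2.2.1.m0.toLp)
  map_add' _ _ := rfl
  map_smul' _ _ := rfl

noncomputable def PsiL {N : ℕ} (g : ℝ → ℝ) (ω : ℝ) (φ : Rn N → ℂ) : Dsub g φ →ₗ[ℂ] EE N where
  toFun u := WithLp.toLp 2 ((Hc_mem ω u.2.1 u.2.2.2.1).toLp, (Hc_mem ω u.2.2.1 u.2.2.2.2).toLp)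
  map_add' u v := by
    rw [← WithLp.toLp_add, Prod.mk_add_mk, ← MemLp.toLp_add, ← MemLp.toLp_add]
    congr 2
    · refine MemLp.toLp_congr _ _ (Filter.Eventually.of_forall fun x => ?_)
      rw [← Hc_add ω _ _ u.2.1 v.2.1, ← PotU_add1]; rfl
    · refine MemLp.toLp_congr _ _ (Filter.Eventually.of_forall fun x => ?_)
      rw [← Hc_add ω _ _ u.2.2.1 v.2.2.1, ← PotU_add2]; rfl
  map_smul' c u := by
    rw [RingHom.id_apply, ← WithLp.toLp_smul, Prod.smul_mk, ← MemLp.toLp_const_smul, ← MemLp.toLp_const_smul]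
    congr 2
    · refine MemLp.toLp_congr _ _ (Filter.Eventually.of_forall fun x => ?_)
      rw [← Hc_smul ω c _ u.2.1, ← PotU_smul1]; rfl
    · refine MemLp.toLp_congr _ _ (Filter.Eventually.of_forall fun x => ?_)
      rw [← Hc_smul ω c _ u.2.2.1, ← PotU_smul2]; rfl

noncomputable def JL (N : ℕ) : EE N →ₗ[ℂ] EE N where
  toFun x := WithLp.toLp 2 (x.snd, -x.fst)
  map_add' x y := by
    rw [← WithLp.toLp_add, Prod.mk_add_mk]
    congr 2
    simp [add_comm]
  map_smul' c x := by
    rw [RingHom.id_apply, ← WithLp.toLp_smul, Prod.smul_mk]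
    congr 2
    simp

lemma JL_skew {N : ℕ} (x y : EE N) : inner ℂ (JL N x) y = - inner ℂ x (JL N y) := by
  rw [WithLp.prod_inner_apply, WithLp.prod_inner_apply]
  simp [JL]

lemma JL_sq {N : ℕ} (x : EE N) : JL N (JL N x) = -x := by
  apply WithLp.ofLp_injective
  rfl

lemma sym_PhiPsi {N : ℕ} (g : ℝ → ℝ) (ω : ℝ) (φ : Rn N → ℂ) (hf : Differentiable ℝ (fpot g)) (h0 : fderiv ℝ (fpot g) 0 = 0)
    (u w : Dsub g φ) : inner ℂ (PhiL g φ u) (PsiL g ω φ w) = inner ℂ (PsiL g ω φ u) (PhiL g φ w) := by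
  rw [WithLp.prod_inner_apply, WithLp.prod_inner_apply]
  have e1 := (inner_toLp' u.2.1.m0 (Hc_mem ω w.2.1 w.2.2.2.1)).trans (int_Hc_r ω u.2.1 w.2.1 w.2.2.2.1)
  have e2 := (inner_toLp' u.2.2.1.m0 (Hc_mem ω w.2.2.1 w.2.2.2.2)).trans (int_Hc_r ω u.2.2.1 w.2.2.1 w.2.2.2.2)
  have e3 := (inner_toLp' (Hc_mem ω u.2.1 u.2.2.2.1) w.2.1.m0).trans (int_Hc_l ω w.2.1 u.2.1 u.2.2.2.1)
  have e4 := (inner_toLp' (Hc_mem ω u.2.2.1 u.2.2.2.2) w.2.2.1.m0).trans (int_Hc_l ω w.2.2.1 u.2.2.1 u.2.2.2.2)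
  refine (congrArg₂ (· + ·) e1 e2).trans (Eq.trans ?_ (congrArg₂ (· + ·) e3 e4).symm)
  have s1 := lap_symm u.2.1 w.2.1
  have s2 := lap_symm u.2.2.1 w.2.2.1
  have hp : (∫ x, (starRingEnd ℂ) ((u.1 x).1) * (PotU g φ w.1 x).1) + (∫ x, (starRingEnd ℂ) ((u.1 x).2) * (PotU g φ w.1 x).2)
      = (∫ x, (starRingEnd ℂ) ((PotU g φ u.1 x).1) * (w.1 x).1) + (∫ x, (starRingEnd ℂ) ((PotU g φ u.1 x).2) * (w.1 x).2) := by
    rw [← integral_add (int_conj_mul u.2.1.m0 w.2.2.2.1) (int_conj_mul u.2.2.1.m0 w.2.2.2.2),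
      ← integral_add (int_conj_mul u.2.2.2.1 w.2.1.m0) (int_conj_mul u.2.2.2.2 w.2.2.1.m0)]
    congr 1; ext x
    have := Df_symm g hf h0 (φ x)
    simp only [PotU, cext, this, map_add, map_mul, Complex.conj_ofReal]
    ring
  linear_combination (-1 : ℂ) * s1 - s2 + hp

end Aux6

section Aux7

lemma lint_sq {N : ℕ} {F : Type} [NormedAddCommGroup F] (f : Rn N → F)
    (hi : Integrable (fun x => ‖f x‖ ^ 2)) : ∫⁻ x, ‖f x‖ₑ ^ 2 = ENNReal.ofReal (∫ x, ‖f x‖ ^ 2) := by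
  rw [ofReal_integral_eq_lintegral_ofReal hi (Filter.Eventually.of_forall fun x => by positivity)]
  congr 1; ext x
  rw [ENNReal.ofReal_pow (norm_nonneg _), ofReal_norm]

lemma pot_real {N : ℕ} (hN : 1 ≤ N) {g : ℝ → ℝ} {f₁ f₂ : ℂ → ℂ} {p₁ p₂ : ℝ}
    (h1 : H1full N g f₁ f₂ p₁ p₂) (φ : Rn N → ℂ) (hφ : ContDiff ℝ 1 φ) (hE : EH1 φ ≠ ∞)
    (ω : ℝ) (hω : 0 < ω) :
    ∃ R δ K : ℝ, 0 < δ ∧ 0 ≤ K ∧ ∀ a : Rn N → ℂ, S2 a →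
      Integrable (fun x => 2 * (‖fderiv ℝ (fpot g) (φ x)‖ * ‖a x‖ ^ 2)) ∧
      ∫ x, 2 * (‖fderiv ℝ (fpot g) (φ x)‖ * ‖a x‖ ^ 2)
        ≤ ω / 2 * (∫ x, ‖a x‖ ^ 2) + (∫ x, ‖fderiv ℝ a x‖ ^ 2) + K * (Tavg R δ a).toReal := by
  obtain ⟨R, δ, K, hδ, hK, h⟩ := pot_est hN h1 φ hφ hE ω hω
  refine ⟨R, δ, K, hδ, hK, fun a ha => ?_⟩
  have h := h a (ha.cd.of_le (by norm_num))
  have hi0 : Integrable (fun x => ‖a x‖ ^ 2) := ha.m0.integrable_norm_pow (by norm_num)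
  have hi1 := (lap_re ha).1
  have hT := Tavg_lt_top R hδ a ha.m0
  rw [lint_sq a hi0, lint_sq (fderiv ℝ a) hi1, ← ENNReal.ofReal_toReal hT, ← ENNReal.ofReal_mul (by positivity),
    ← ENNReal.ofReal_mul hK, ← ENNReal.ofReal_add (by positivity) (by positivity),
    ← ENNReal.ofReal_add (by positivity) (by positivity), ← lintegral_const_mul' _ _ (by simp)] at h
  have hc : Continuous (fun x => 2 * (‖fderiv ℝ (fpot g) (φ x)‖ * ‖a x‖ ^ 2)) := by
    have c1 := (fpot_contDiff h1).continuous_fderiv (by simp)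
    have c2 := hφ.continuous
    have c3 := ha.cd.continuous
    have c4 := c1.comp c2
    simp only [Function.comp_def] at c4
    fun_prop
  have e : ∀ x, ENNReal.ofReal (2 * (‖fderiv ℝ (fpot g) (φ x)‖ * ‖a x‖ ^ 2)) =
      2 * (‖fderiv ℝ (fpot g) (φ x)‖ₑ * ‖a x‖ₑ ^ 2) := by
    intro x
    rw [ENNReal.ofReal_mul (by norm_num), ENNReal.ofReal_mul (by positivity), ENNReal.ofReal_pow (norm_nonneg _),
      ofReal_norm, ofReal_norm]
    simp
  simp only [← e] at h
  constructor
  · refine ⟨hc.aestronglyMeasurable, ?_⟩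
    rw [hasFiniteIntegral_iff_ofReal (Filter.Eventually.of_forall fun x => by positivity)]
    exact lt_of_le_of_lt h ENNReal.ofReal_lt_top
  · rw [integral_eq_lintegral_of_nonneg_ae (Filter.Eventually.of_forall fun x => by positivity) hc.aestronglyMeasurable]
    exact ENNReal.toReal_le_of_le_ofReal (by positivity) h

lemma pot_pt (T : ℂ →L[ℝ] ℂ) (w : ℂ × ℂ) :
    ‖(starRingEnd ℂ) w.1 * (cext T w).1 + (starRingEnd ℂ) w.2 * (cext T w).2‖ ≤
      2 * (‖T‖ * ‖w.1‖ ^ 2) + 2 * (‖T‖ * ‖w.2‖ ^ 2) := by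
  have n1 : ‖T 1‖ ≤ ‖T‖ := by simpa using T.le_opNorm 1
  have n2 : ‖T Complex.I‖ ≤ ‖T‖ := by simpa using T.le_opNorm Complex.I
  have k1 : ‖((T 1).re : ℂ)‖ ≤ ‖T‖ := by
    rw [Complex.norm_real]; exact (Complex.abs_re_le_norm _).trans n1
  have k2 : ‖((T 1).im : ℂ)‖ ≤ ‖T‖ := by
    rw [Complex.norm_real]; exact (Complex.abs_im_le_norm _).trans n1
  have k3 : ‖((T Complex.I).re : ℂ)‖ ≤ ‖T‖ := by
    rw [Complex.norm_real]; exact (Complex.abs_re_le_norm _).trans n2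
  have k4 : ‖((T Complex.I).im : ℂ)‖ ≤ ‖T‖ := by
    rw [Complex.norm_real]; exact (Complex.abs_im_le_norm _).trans n2
  have m1 : ‖(cext T w).1‖ ≤ ‖T‖ * (‖w.1‖ + ‖w.2‖) := by
    simp only [cext]
    refine (norm_add_le _ _).trans ?_
    rw [norm_mul, norm_mul, mul_add]
    gcongr
  have m2 : ‖(cext T w).2‖ ≤ ‖T‖ * (‖w.1‖ + ‖w.2‖) := by
    simp only [cext]
    refine (norm_add_le _ _).trans ?_
    rw [norm_mul, norm_mul, mul_add]
    gcongr
  refine (norm_add_le _ _).trans ?_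
  rw [norm_mul, norm_mul, RCLike.norm_conj, RCLike.norm_conj]
  have t1 := mul_le_mul_of_nonneg_left m1 (norm_nonneg w.1)
  have t2 := mul_le_mul_of_nonneg_left m2 (norm_nonneg w.2)
  nlinarith [mul_nonneg (norm_nonneg T) (sq_nonneg (‖w.1‖ - ‖w.2‖))]

lemma norm_toLp_sq {N : ℕ} {a : Rn N → ℂ} (ha : MemLp a 2 (volume : Measure (Rn N))) :
    ‖ha.toLp‖ ^ 2 = ∫ x, ‖a x‖ ^ 2 := by
  rw [@norm_sq_eq_re_inner ℂ, inner_toLp']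
  have : ∀ x, (starRingEnd ℂ) (a x) * a x = ((‖a x‖ ^ 2 : ℝ) : ℂ) := by
    intro x; rw [Complex.conj_mul']; push_cast; rfl
  simp only [this]
  rw [integral_complex_ofReal]; simp

lemma norm_Phi_sq {N : ℕ} (g : ℝ → ℝ) (φ : Rn N → ℂ) (u : Dsub g φ) :
    ‖PhiL g φ u‖ ^ 2 = (∫ x, ‖(u.1 x).1‖ ^ 2) + ∫ x, ‖(u.1 x).2‖ ^ 2 := by
  rw [WithLp.prod_norm_sq_eq_of_L2]
  exact congrArg₂ (· + ·) (norm_toLp_sq u.2.1.m0) (norm_toLp_sq u.2.2.1.m0)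

lemma conj_mul_re {N : ℕ} (a : Rn N → ℂ) : (∫ x, (starRingEnd ℂ) (a x) * a x).re = ∫ x, ‖a x‖ ^ 2 := by
  have : ∀ x, (starRingEnd ℂ) (a x) * a x = ((‖a x‖ ^ 2 : ℝ) : ℂ) := by
    intro x; rw [Complex.conj_mul']; push_cast; rfl
  simp only [this]
  rw [integral_complex_ofReal]; simp

lemma lower {N : ℕ} (hN : 1 ≤ N) {g : ℝ → ℝ} {f₁ f₂ : ℂ → ℂ} {p₁ p₂ : ℝ}
    (h1 : H1full N g f₁ f₂ p₁ p₂) (φ : Rn N → ℂ) (hφ : ContDiff ℝ 1 φ) (hE : EH1 φ ≠ ∞)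
    (ω : ℝ) (hω : 0 < ω) :
    ∃ R δ K : ℝ, 0 < δ ∧ 0 ≤ K ∧ ∀ u : Dsub g φ,
      ω / 2 * ‖PhiL g φ u‖ ^ 2 ≤ (inner ℂ (PhiL g φ u) (PsiL g ω φ u)).re +
        K * ((Tavg R δ (fun x => (u.1 x).1)).toReal + (Tavg R δ (fun x => (u.1 x).2)).toReal) := by
  obtain ⟨R, δ, K, hδ, hK, h⟩ := pot_real hN h1 φ hφ hE ω hω
  refine ⟨R, δ, K, hδ, hK, fun u => ?_⟩
  obtain ⟨i1, b1⟩ := h _ u.2.1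
  obtain ⟨i2, b2⟩ := h _ u.2.2.1
  have l1 := (lap_re u.2.1).2
  have l2 := (lap_re u.2.2.1).2
  have e1 := (inner_toLp' u.2.1.m0 (Hc_mem ω u.2.1 u.2.2.2.1)).trans (int_Hc_r ω u.2.1 u.2.1 u.2.2.2.1)
  have e2 := (inner_toLp' u.2.2.1.m0 (Hc_mem ω u.2.2.1 u.2.2.2.2)).trans (int_Hc_r ω u.2.2.1 u.2.2.1 u.2.2.2.2)
  have e := congrArg₂ (· + ·) e1 e2
  have e' : inner ℂ (PhiL g φ u) (PsiL g ω φ u) = _ := e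
  have hp : -((∫ x, 2 * (‖fderiv ℝ (fpot g) (φ x)‖ * ‖(u.1 x).1‖ ^ 2)) + ∫ x, 2 * (‖fderiv ℝ (fpot g) (φ x)‖ * ‖(u.1 x).2‖ ^ 2)) ≤
      ((∫ x, (starRingEnd ℂ) ((u.1 x).1) * (PotU g φ u.1 x).1) + (∫ x, (starRingEnd ℂ) ((u.1 x).2) * (PotU g φ u.1 x).2)).re := by
    rw [← integral_add (int_conj_mul u.2.1.m0 u.2.2.2.1) (int_conj_mul u.2.2.1.m0 u.2.2.2.2), ← integral_add i1 i2]
    rw [neg_le]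
    refine (neg_le_abs _).trans ((Complex.abs_re_le_norm _).trans ((norm_integral_le_integral_norm _).trans ?_))
    refine integral_mono ((int_conj_mul u.2.1.m0 u.2.2.2.1).add (int_conj_mul u.2.2.1.m0 u.2.2.2.2)).norm (i1.add i2) fun x => ?_
    exact pot_pt _ _
  rw [e', norm_Phi_sq]
  have r1 := conj_mul_re (fun x => (u.1 x).1)
  have r2 := conj_mul_re (fun x => (u.1 x).2)
  simp only [Complex.add_re, Complex.neg_re, Complex.re_ofReal_mul, r1, r2] at hp l1 l2 ⊢
  linarith

lemma key_prop {N : ℕ} (hN : 1 ≤ N) {g : ℝ → ℝ} {f₁ f₂ : ℂ → ℂ} {p₁ p₂ : ℝ}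
    (h1 : H1full N g f₁ f₂ p₁ p₂) (φ : Rn N → ℂ) (hφ : ContDiff ℝ 1 φ) (hE : EH1 φ ≠ ∞)
    (ω : ℝ) (hω : 0 < ω) : KeyProp (PhiL g φ) (PsiL g ω φ) := by
  intro u c C hc hu1 hu2 hw ht
  obtain ⟨R, δ, K, hδ, hK, h⟩ := lower hN h1 φ hφ hE ω hω
  have n1 : ∀ n, ‖((u n).2.1.m0).toLp‖ ≤ C := fun n => (WithLp.norm_fst_le _ (PhiL g φ (u n))).trans (hu2 n)
  have n2 : ∀ n, ‖((u n).2.2.1.m0).toLp‖ ≤ C := fun n => (WithLp.norm_snd_le _ (PhiL g φ (u n))).trans (hu2 n)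
  have t1 := Tavg_tendsto R hδ (fun n x => ((u n).1 x).1) (fun n => (u n).2.1.cd.continuous)
    (fun n => (u n).2.1.m0) C n1 (fun w => by
      refine (hw (WithLp.toLp 2 (w, 0))).congr fun n => ?_
      rw [WithLp.prod_inner_apply]
      simp only [inner_zero_left, add_zero]
      rfl)
  have t2 := Tavg_tendsto R hδ (fun n x => ((u n).1 x).2) (fun n => (u n).2.2.1.cd.continuous)
    (fun n => (u n).2.2.1.m0) C n2 (fun w => by
      refine (hw (WithLp.toLp 2 (0, w))).congr fun n => ?_
      rw [WithLp.prod_inner_apply]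
      simp only [inner_zero_left, zero_add]
      rfl)
  have t1' := (ENNReal.tendsto_toReal zero_ne_top).comp t1
  have t2' := (ENNReal.tendsto_toReal zero_ne_top).comp t2
  have lim := ht.add ((t1'.add t2').const_mul K)
  simp only [ENNReal.toReal_zero, add_zero, mul_zero] at lim
  have hle : ω / 2 * c ^ 2 ≤ 0 := by
    refine ge_of_tendsto' lim fun n => ?_
    refine le_trans ?_ (h (u n))
    have := hu1 n
    gcongr
  have : 0 < ω / 2 * c ^ 2 := by positivity
  linarith

end Aux7

section Aux8

lemma mem_D {N : ℕ} {g : ℝ → ℝ} {ω : ℝ} {φ : Rn N → ℂ} {z : ℂ} {u : Rn N → ℂ × ℂ} (hu : MemSobolev 2 u)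
    (he : MemLp (fun x => AopC g ω φ u x - z • u x) 2 (volume : Measure (Rn N))) : u ∈ Dsub g φ := by
  have s1 : S2 (fun x => (u x).1) := S2.of_mem hu (ContinuousLinearMap.fst ℝ ℂ ℂ)
  have s2 : S2 (fun x => (u x).2) := S2.of_mem hu (ContinuousLinearMap.snd ℝ ℂ ℂ)
  obtain ⟨h1, h2⟩ := memLp_prod_iff.1 he
  refine ⟨s1, s2, ?_, ?_⟩
  · have : (fun x => (PotU g φ u x).1) = -(fun x => (AopC g ω φ u x - z • u x).2) - z • (fun x => (u x).2)
        + lap (fun x => (u x).1) - (ω : ℂ) • (fun x => (u x).1) := by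
      ext x; simp [PotU, AopC]; ring
    rw [this]
    exact ((h2.neg.sub (s2.m0.const_smul z)).add s1.memLap).sub (s1.m0.const_smul _)
  · have : (fun x => (PotU g φ u x).2) = (fun x => (AopC g ω φ u x - z • u x).1) + z • (fun x => (u x).1)
        + lap (fun x => (u x).2) - (ω : ℂ) • (fun x => (u x).2) := by
      ext x; simp [PotU, AopC]; ring
    rw [this]
    exact ((h1.add (s1.m0.const_smul z)).add s2.memLap).sub (s2.m0.const_smul _)

lemma AopC_cont {N : ℕ} {g : ℝ → ℝ} {ω : ℝ} {φ : Rn N → ℂ} (hf : ContDiff ℝ 1 (fpot g)) (hφ : Continuous φ)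
    {u : Rn N → ℂ × ℂ} (hu : MemSobolev 2 u) : Continuous (AopC g ω φ u) := by
  have s1 : S2 (fun x => (u x).1) := S2.of_mem hu (ContinuousLinearMap.fst ℝ ℂ ℂ)
  have s2 : S2 (fun x => (u x).2) := S2.of_mem hu (ContinuousLinearMap.snd ℝ ℂ ℂ)
  have lc : ∀ a : Rn N → ℂ, S2 a → Continuous (lap a) := by
    intro a ha
    have : lap a = fun x => ∑ i, pd i (pd i a) x := by ext x; rw [lap_eq ha.cd]
    rw [this]
    exact continuous_finsetSum _ fun i _ => pd_cont i (pd_cd1 i ha.cd)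
  have l1 := lc _ s1
  have l2 := lc _ s2
  have hu' : Continuous u := hu.1.continuous
  have c1 := (hf.continuous_fderiv (by simp)).comp hφ
  have d1 : Continuous (fun x => fderiv ℝ (fpot g) (φ x) 1) := c1.clm_apply continuous_const
  have d2 : Continuous (fun x => fderiv ℝ (fpot g) (φ x) Complex.I) := c1.clm_apply continuous_const
  unfold AopC cext
  fun_prop

lemma Phi_inj {N : ℕ} {g : ℝ → ℝ} {φ : Rn N → ℂ} : Function.Injective (PhiL g φ) := by
  rw [← LinearMap.ker_eq_bot, LinearMap.ker_eq_bot']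
  intro u hu
  have h1 : u.2.1.m0.toLp = 0 := congrArg (fun y : EE N => y.fst) hu
  have h2 : u.2.2.1.m0.toLp = 0 := congrArg (fun y : EE N => y.snd) hu
  have key : ∀ (a : Rn N → ℂ) (ha : MemLp a 2 (volume : Measure (Rn N))), Continuous a → ha.toLp = 0 → a = 0 := by
    intro a ha hc h
    have : a =ᵐ[volume] (0 : Rn N → ℂ) := by
      have e := ha.coeFn_toLp
      rw [h] at e
      exact e.symm.trans (Lp.coeFn_zero _ _ _)
    exact (Continuous.ae_eq_iff_eq volume hc continuous_zero).1 this
  have k1 := key _ _ u.2.1.cd.continuous h1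
  have k2 := key _ _ u.2.2.1.cd.continuous h2
  apply Subtype.ext
  funext x
  exact Prod.ext (congrFun k1 x) (congrFun k2 x)

noncomputable def Alin {N : ℕ} (g : ℝ → ℝ) (ω : ℝ) (φ : Rn N → ℂ) : Dsub g φ →ₗ[ℂ] (Rn N → ℂ × ℂ) where
  toFun u := AopC g ω φ u.1
  map_add' u v := by
    funext x
    have h1 := congrFun (Hc_add ω (fun x => (PotU g φ u.1 x).1) (fun x => (PotU g φ v.1 x).1) u.2.1 v.2.1) x
    have h2 := congrFun (Hc_add ω (fun x => (PotU g φ u.1 x).2) (fun x => (PotU g φ v.1 x).2) u.2.2.1 v.2.2.1) x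
    rw [← PotU_add1] at h1
    rw [← PotU_add2] at h2
    refine Prod.ext h2 ?_
    refine (congrArg Neg.neg h1).trans ?_
    exact neg_add _ _
  map_smul' c u := by
    funext x
    have h1 := congrFun (Hc_smul ω c (fun x => (PotU g φ u.1 x).1) u.2.1) x
    have h2 := congrFun (Hc_smul ω c (fun x => (PotU g φ u.1 x).2) u.2.2.1) x
    rw [← PotU_smul1] at h1
    rw [← PotU_smul2] at h2
    refine Prod.ext h2 ?_
    refine (congrArg Neg.neg h1).trans ?_
    exact (smul_neg c _).symm

lemma JPsi_sub {N : ℕ} (g : ℝ → ℝ) (ω : ℝ) (φ : Rn N → ℂ) (z : ℂ) (u : Dsub g φ)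
    (h1 : MemLp (fun x => (AopC g ω φ u.1 x - z • u.1 x).1) 2 (volume : Measure (Rn N)))
    (h2 : MemLp (fun x => (AopC g ω φ u.1 x - z • u.1 x).2) 2 (volume : Measure (Rn N))) :
    JL N (PsiL g ω φ u) - z • PhiL g φ u = WithLp.toLp 2 (h1.toLp, h2.toLp) := by
  apply WithLp.ofLp_injective
  refine Prod.ext ?_ ?_
  · change (Hc_mem ω u.2.2.1 u.2.2.2.2).toLp - z • u.2.1.m0.toLp = h1.toLp
    rw [← MemLp.toLp_const_smul, ← MemLp.toLp_sub]
    rfl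
  · change -(Hc_mem ω u.2.1 u.2.2.2.1).toLp - z • u.2.2.1.m0.toLp = h2.toLp
    rw [← MemLp.toLp_const_smul, ← MemLp.toLp_neg, ← MemLp.toLp_sub]
    rfl

lemma fin_part {N : ℕ} (hN : 1 ≤ N) {g : ℝ → ℝ} {f₁ f₂ : ℂ → ℂ} {p₁ p₂ ω : ℝ}
    (h1 : H1full N g f₁ f₂ p₁ p₂) (φ : Rn N → ℂ) (h2 : H2hyp ω g φ) :
    Set.Finite {z : ℂ | 0 < z.re ∧ IsEigen g ω φ z} := by
  by_contra hinf
  have hinf : Set.Infinite {z : ℂ | 0 < z.re ∧ IsEigen g ω φ z} := hinf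
  have hφ : ContDiff ℝ 1 φ := by simpa using h2.2.2.1.1
  have hK := key_prop hN h1 φ hφ (EH1_ne_top h2.2.2.1) ω h2.1
  let z : ℕ → ℂ := fun n => (hinf.natEmbedding _ n : ℂ)
  have hzi : Function.Injective z := fun m n h => (hinf.natEmbedding _).injective (Subtype.ext h)
  have hz : ∀ n, 0 < (z n).re ∧ IsEigen g ω φ (z n) := fun n => (hinf.natEmbedding _ n).2
  choose χ hne hms heq using fun n => (hz n).2
  have hzero : ∀ n, (fun x => AopC g ω φ (χ n) x - z n • χ n x) = 0 := by
    intro n; funext x; rw [heq n x, sub_self]; rfl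
  have hm : ∀ n, MemLp (fun x => AopC g ω φ (χ n) x - z n • χ n x) 2 (volume : Measure (Rn N)) := by
    intro n; rw [hzero]; exact MemLp.zero
  let v : ℕ → Dsub g φ := fun n => ⟨χ n, mem_D (hms n) (hm n)⟩
  have hf := fpot_contDiff h1
  refine abs_fin (PhiL g φ) (PsiL g ω φ) (JL N) JL_skew JL_sq
    (sym_PhiPsi g ω φ (hf.differentiable (by simp)) (fpot_fderiv_zero h1)) hK z (fun n => (hz n).1) v ?_ ?_
  · obtain ⟨T, hT⟩ := LinearMap.exists_extend (Alin g ω φ)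
    have li : LinearIndependent ℂ χ := by
      refine Module.End.eigenvectors_linearIndependent' T z hzi χ fun n => ?_
      refine ⟨Module.End.mem_eigenspace_iff.2 ?_, hne n⟩
      have := LinearMap.congr_fun hT (v n)
      refine Eq.trans this ?_
      funext x
      exact heq n x
    have li2 : LinearIndependent ℂ v := LinearIndependent.of_comp (Dsub g φ).subtype li
    exact li2.map' (PhiL g φ) (LinearMap.ker_eq_bot.2 Phi_inj)
  · intro n
    obtain ⟨m1, m2⟩ := memLp_prod_iff.1 (hm n)
    have := JPsi_sub g ω φ (z n) (v n) m1 m2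
    rw [← sub_eq_zero, this]
    have e1 : m1.toLp = 0 := (MemLp.toLp_eq_toLp_iff m1 MemLp.zero).2
      (Filter.Eventually.of_forall fun x => congrArg Prod.fst (congrFun (hzero n) x))
    have e2 : m2.toLp = 0 := (MemLp.toLp_eq_toLp_iff m2 MemLp.zero).2
      (Filter.Eventually.of_forall fun x => congrArg Prod.snd (congrFun (hzero n) x))
    rw [e1, e2]; rfl

lemma toLp_norm_le {N : ℕ} {w : Rn N → ℂ × ℂ} (hw : MemLp w 2 (volume : Measure (Rn N)))
    (h1 : MemLp (fun x => (w x).1) 2 (volume : Measure (Rn N))) (h2 : MemLp (fun x => (w x).2) 2 (volume : Measure (Rn N))) :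
    ‖(WithLp.toLp 2 (h1.toLp, h2.toLp) : EE N)‖ ≤ 2 * (eLpNorm w 2 volume).toReal ∧
    (eLpNorm w 2 volume).toReal ≤ 2 * ‖(WithLp.toLp 2 (h1.toLp, h2.toLp) : EE N)‖ := by
  have n1 : ‖h1.toLp‖ ≤ (eLpNorm w 2 volume).toReal := by
    rw [Lp.norm_toLp]
    exact ENNReal.toReal_mono hw.2.ne (eLpNorm_mono fun x => norm_fst_le _)
  have n2 : ‖h2.toLp‖ ≤ (eLpNorm w 2 volume).toReal := by
    rw [Lp.norm_toLp]
    exact ENNReal.toReal_mono hw.2.ne (eLpNorm_mono fun x => norm_snd_le _)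
  have n3 : (eLpNorm w 2 volume).toReal ≤ ‖h1.toLp‖ + ‖h2.toLp‖ := by
    rw [Lp.norm_toLp, Lp.norm_toLp, ← ENNReal.toReal_add h1.2.ne h2.2.ne]
    refine ENNReal.toReal_mono (ENNReal.add_ne_top.2 ⟨h1.2.ne, h2.2.ne⟩) ?_
    rw [← eLpNorm_norm (fun x => (w x).1), ← eLpNorm_norm (fun x => (w x).2)]
    refine le_trans ?_ (eLpNorm_add_le h1.norm.1 h2.norm.1 (by norm_num))
    refine eLpNorm_mono fun x => ?_
    rw [Pi.add_apply, Real.norm_of_nonneg (by positivity), Prod.norm_def]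
    exact max_le (by linarith [norm_nonneg (w x).2]) (by linarith [norm_nonneg (w x).1])
  have hs := WithLp.prod_norm_sq_eq_of_L2 (WithLp.toLp 2 (h1.toLp, h2.toLp) : EE N)
  have hs' : ‖(WithLp.toLp 2 (h1.toLp, h2.toLp) : EE N)‖ ^ 2 = ‖h1.toLp‖ ^ 2 + ‖h2.toLp‖ ^ 2 := hs
  have p1 := norm_nonneg h1.toLp
  have p2 := norm_nonneg h2.toLp
  constructor
  · refine le_trans (abs_le_of_sq_le_sq' (b := ‖h1.toLp‖ + ‖h2.toLp‖) (by rw [hs']; nlinarith) (by positivity)).2 (by linarith)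
  · have q1 := WithLp.norm_fst_le _ (WithLp.toLp 2 (h1.toLp, h2.toLp) : EE N)
    have q2 := WithLp.norm_snd_le _ (WithLp.toLp 2 (h1.toLp, h2.toLp) : EE N)
    change ‖h1.toLp‖ ≤ _ at q1
    change ‖h2.toLp‖ ≤ _ at q2
    linarith

lemma ess_part {N : ℕ} (hN : 1 ≤ N) {g : ℝ → ℝ} {f₁ f₂ : ℂ → ℂ} {p₁ p₂ ω : ℝ}
    (h1 : H1full N g f₁ f₂ p₁ p₂) (φ : Rn N → ℂ) (h2 : H2hyp ω g φ) (z : ℂ) (hz : InEssSpec g ω φ z) : z.re = 0 := by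
  have hφ : ContDiff ℝ 1 φ := by simpa using h2.2.2.1.1
  have hK := key_prop hN h1 φ hφ (EH1_ne_top h2.2.2.1) ω h2.1
  have hf := fpot_contDiff h1
  obtain ⟨u, hms, hnorm, hlim, hweak⟩ := hz
  obtain ⟨n0, hn0⟩ := Filter.eventually_atTop.1 (hlim.eventually (gt_mem_nhds (zero_lt_one)))
  have hm : ∀ n, MemLp (fun x => AopC g ω φ (u (n + n0)) x - z • u (n + n0) x) 2 (volume : Measure (Rn N)) := by
    intro n
    refine ⟨?_, (hn0 (n + n0) (by omega)).trans ENNReal.one_lt_top⟩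
    have c1 := AopC_cont (ω := ω) hf hφ.continuous (hms (n + n0))
    have c2 : Continuous (u (n + n0)) := (hms (n + n0)).1.continuous
    exact (c1.sub (c2.const_smul z)).aestronglyMeasurable
  have hum : ∀ n, MemLp (u n) 2 (volume : Measure (Rn N)) := fun n =>
    ⟨(hms n).1.continuous.aestronglyMeasurable, by rw [hnorm]; exact ENNReal.one_lt_top⟩
  let v : ℕ → Dsub g φ := fun n => ⟨u (n + n0), mem_D (hms _) (hm n)⟩
  have hb : ∀ n, ‖PhiL g φ (v n)‖ ≤ 2 ∧ 1 ≤ 2 * ‖PhiL g φ (v n)‖ := by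
    intro n
    have := toLp_norm_le (hum (n + n0)) (v n).2.1.m0 (v n).2.2.1.m0
    rw [hnorm, ENNReal.toReal_one, mul_one] at this
    exact this
  refine abs_ess (PhiL g φ) (PsiL g ω φ) (JL N) JL_skew JL_sq
    (sym_PhiPsi g ω φ (hf.differentiable (by simp)) (fpot_fderiv_zero h1)) hK z v (1/2) 2 (by norm_num)
    (fun n => by linarith [(hb n).2]) (fun n => (hb n).1) (fun w => ?_) ?_
  · have hwm : MemLp (fun x => ((w.fst : Rn N → ℂ) x, (w.snd : Rn N → ℂ) x)) 2 (volume : Measure (Rn N)) :=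
      memLp_prod_iff.2 ⟨Lp.memLp w.fst, Lp.memLp w.snd⟩
    have hl := (Filter.tendsto_add_atTop_iff_nat n0).2 (hweak _ hwm)
    have hl2 := (Complex.continuous_conj.tendsto _).comp hl
    rw [map_zero] at hl2
    refine hl2.congr fun n => ?_
    rw [Function.comp_apply, ← inner_conj_symm w]
    congr 1
    rw [WithLp.prod_inner_apply]
    have a1 := inner_toLp' (v n).2.1.m0 (Lp.memLp w.fst)
    have a2 := inner_toLp' (v n).2.2.1.m0 (Lp.memLp w.snd)
    rw [Lp.toLp_coeFn] at a1 a2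
    refine Eq.trans ?_ (congrArg₂ (· + ·) a1 a2).symm
    unfold l2innerC2
    exact integral_add (int_conj_mul (v n).2.1.m0 (Lp.memLp w.fst)) (int_conj_mul (v n).2.2.1.m0 (Lp.memLp w.snd))
  · have hl := (Filter.tendsto_add_atTop_iff_nat n0).2 hlim
    have hl2 := ((ENNReal.tendsto_toReal zero_ne_top).comp hl).const_mul 2
    rw [ENNReal.toReal_zero, mul_zero] at hl2
    refine squeeze_zero (fun n => norm_nonneg _) (fun n => ?_) hl2
    obtain ⟨m1, m2⟩ := memLp_prod_iff.1 (hm n)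
    rw [JPsi_sub g ω φ z (v n) m1 m2]
    exact (toLp_norm_le (hm n) m1 m2).1

end Aux8


noncomputable section

/-- under (H1)-(H2) the essential spectrum of A = J(H₀ + Df(φ)) lies on the
imaginary axis and A has only finitely many eigenvalues with positive real part. -/
theorem essential_spectrum_and_finitely_many_unstable_eigenvalues
    {N : ℕ} (hN : 1 ≤ N) (g : ℝ → ℝ) (f₁ f₂ : ℂ → ℂ) (p₁ p₂ ω : ℝ)
    (φ : Rn N → ℂ)
    (h1 : H1full N g f₁ f₂ p₁ p₂) (h2 : H2hyp ω g φ) :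
    (∀ z : ℂ, InEssSpec g ω φ z → z.re = 0) ∧
    Set.Finite {z : ℂ | 0 < z.re ∧ IsEigen g ω φ z} := by
  exact ⟨fun z hz => ess_part hN h1 φ h2 z hz, fin_part hN h1 φ h2⟩

end
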